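/- Let K be a field, let d be a natural number, and let G be a finitely generated subgroup of the general linear group GL(d, K). Then G has bVCyc if and only if G is virtually cyclic. (In particular, a finitely generated linear group has BVC if and only if it is virtually cyclic.) -/

import Mathlib

/-!
The proof reduces a finitely generated linear group `G` with bVCyc to a solvable group, and then
treats solvable groups. The assumption enters in the form `bVCyc.exists_pow`: there are a finite set
`C` and an `N > 0` such that the `N`-th power of every element is conjugate to a power of some
`c ∈ C`. The converse implication is trivial.

*Eigenvalues of commutators.* Let `G0` be a finite index subgroup contained in all subgroups of index
at most `d ^ d`. Let `G` act on `L ^ d`, where `L` is an algebraically closed normed field, and suppose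
that `g ∈ ⁅G0, G0⁆` has an eigenvalue of modulus greater than `1`. Then `g` acts proximally on
alternating forms of a suitable degree `k` (`exists_dominant_form`): the normalised powers of the
action converge to a projection of rank one `w ↦ l(w) v`. Comparing the traces of the words
`g ^ a x g ^ b y` with those of the powers of elements of `C`, only boundedly many of which have a
given order of magnitude, one finds that the coefficient `χ x = l (x v)` is multiplicative where it
does not vanish (`proximal_mul`). So `{χ ≠ 0}` is a subgroup of index at most `d ^ k` and `χ` is a
character of it which is nontrivial at `g` (`proximal_subgroup`), contradicting
`g ∈ ⁅G0, G0⁆`. Hence all eigenvalues on `⁅G0, G0⁆` have modulus at most `1`, for every such `L`.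
As an element that is not a root of unity has a place where its absolute value is not `1`
(`exists_place`), which extends to a finitely generated ring of definition of `G`
(`exists_specialization`), these eigenvalues are roots of unity, and by the finiteness of `C` of
bounded order (`exists_eigenvalue_exponent`).

*Solvability.* Reducing a finitely generated ring of definition modulo a maximal ideal which separates
these roots of unity from `1` yields a finite index subgroup `G1` for which `⁅G1, G1⁆` consists of
unipotent elements. Kolchin's theorem, obtained by reduction to finite fields where unipotent groups
are `p`-groups, shows that `G1` is solvable.

*Solvable groups.* By induction on the derived length (`vc_of_derivedSeries`) it suffices to treat
`M ⋊ ℤ`, with `M` abelian and the generator of `ℤ` acting by `t`. Here bVCyc forces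
`|M ⧸ (t ^ n - 1) M| ≤ C n` for all `n > 0` (`finite_of_cocycle`), and this forces the finitely
generated `ℤ[t, t⁻¹]`-module `M` to be finite (`finite_of_card_quotient_le`): the residue fields of
`ℤ[t, t⁻¹]` modulo maximal ideals are finite, and many of them contribute to the quotient for
well chosen `n`.
-/

/-- A group is *virtually cyclic* if it has a cyclic subgroup of finite index. -/
def VirtuallyCyclic (G : Type*) [Group G] : Prop :=
  ∃ H : Subgroup G, IsCyclic H ∧ H.FiniteIndex

/-- A group has *bVCyc* if there are finitely many virtually cyclic subgroups such that
every element lies in a conjugate of one of them. -/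
def bVCyc (G : Type*) [Group G] : Prop :=
  ∃ 𝒱 : Finset (Subgroup G), (∀ V ∈ 𝒱, VirtuallyCyclic V) ∧
    ∀ g : G, ∃ V ∈ 𝒱, ∃ x : G, x * g * x⁻¹ ∈ V

/-- A group has *BVC* if there are finitely many virtually cyclic subgroups such that
every virtually cyclic subgroup is contained in a conjugate of one of them. -/
def BVC (G : Type*) [Group G] : Prop :=
  ∃ 𝒱 : Finset (Subgroup G), (∀ V ∈ 𝒱, VirtuallyCyclic V) ∧
    ∀ W : Subgroup G, VirtuallyCyclic W →
      ∃ V ∈ 𝒱, ∃ x : G, ∀ w ∈ W, x * w * x⁻¹ ∈ V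

/-- A group has *bCyc* if there are finitely many elements g₁, …, gₙ such that every
element is conjugate to a power of some gᵢ. -/
def bCyc (G : Type*) [Group G] : Prop :=
  ∃ s : Finset G, ∀ g : G, ∃ a ∈ s, ∃ k : ℤ, IsConj g (a ^ k)

/-- An element is *primitive* if it cannot be written as a proper power. -/
def Primitive {G : Type*} [Group G] (g : G) : Prop :=
  ∀ (h : G) (n : ℤ), g = h ^ n → n = 1 ∨ n = -1

/-! ### Virtually cyclic groups and bVCyc -/

section GroupLemmas

lemma vc_of_injective {A B : Type*} [Group A] [Group B] (f : A →* B)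
    (hf : Function.Injective f) (h : VirtuallyCyclic B) : VirtuallyCyclic A := by
  obtain ⟨H, hc, hi⟩ := h
  refine ⟨H.comap f, ?_, ⟨by
    rw [Subgroup.index_comap]
    exact Subgroup.FiniteIndex.index_ne_zero⟩⟩
  let φ : H.comap f →* H := (f.comp (H.comap f).subtype).codRestrict H (fun x => x.2)
  refine isCyclic_of_injective φ ?_
  intro x y hxy
  exact Subtype.ext (hf (congrArg Subtype.val hxy))

lemma vc_of_surjective {A B : Type*} [Group A] [Group B] (f : A →* B)
    (hf : Function.Surjective f) (h : VirtuallyCyclic A) : VirtuallyCyclic B := by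
  obtain ⟨H, hc, hi⟩ := h
  refine ⟨H.map f, ?_, ?_⟩
  · exact isCyclic_of_surjective (f.subgroupMap H) (f.subgroupMap_surjective H)
  · constructor
    intro h0
    have := H.index_map_dvd hf
    rw [h0] at this
    exact hi.index_ne_zero (Nat.eq_zero_of_zero_dvd this)

lemma vc_of_finiteIndex {G : Type*} [Group G] (H : Subgroup G) [hH : H.FiniteIndex]
    (h : VirtuallyCyclic H) : VirtuallyCyclic G := by
  obtain ⟨C, hc, hi⟩ := h
  refine ⟨C.map H.subtype, ?_, ?_⟩
  · exact isCyclic_of_surjective (H.subtype.subgroupMap C) (H.subtype.subgroupMap_surjective C)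
  · constructor
    rw [Subgroup.index_map_subtype]
    exact mul_ne_zero hi.index_ne_zero hH.index_ne_zero

lemma bVCyc_of_surjective {A B : Type*} [Group A] [Group B] (f : A →* B)
    (hf : Function.Surjective f) (h : bVCyc A) : bVCyc B := by
  classical
  obtain ⟨S, hS, hc⟩ := h
  refine ⟨S.image (Subgroup.map f), ?_, ?_⟩
  · intro V hV
    obtain ⟨W, hW, rfl⟩ := Finset.mem_image.1 hV
    exact vc_of_surjective (f.subgroupMap W) (f.subgroupMap_surjective W) (hS W hW)
  · intro g
    obtain ⟨a, rfl⟩ := hf g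
    obtain ⟨V, hV, x, hx⟩ := hc a
    exact ⟨V.map f, Finset.mem_image_of_mem _ hV, f x, ⟨_, hx, by simp⟩⟩

/-- For a finite index subgroup `H`, each `V` is replaced by the traces on `H` of its conjugates by
representatives of the cosets of `H`. -/
lemma bVCyc_of_finiteIndex {G : Type*} [Group G] (H : Subgroup G) [hH : H.FiniteIndex]
    (h : bVCyc G) : bVCyc H := by
  classical
  obtain ⟨S, hS, hc⟩ := h
  have : Finite (G ⧸ H) := H.finite_quotient_of_finiteIndex
  have : Fintype (G ⧸ H) := Fintype.ofFinite _
  let F : Subgroup G × (G ⧸ H) → Subgroup H := fun p =>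
    (p.1.comap (MulAut.conj p.2.out).toMonoidHom).comap H.subtype
  refine ⟨(S ×ˢ Finset.univ).image F, ?_, ?_⟩
  · intro V hV
    obtain ⟨⟨W, q⟩, hW, rfl⟩ := Finset.mem_image.1 hV
    have hW' := (Finset.mem_product.1 hW).1
    let φ : F (W, q) →* W :=
      (((MulAut.conj q.out).toMonoidHom.comp H.subtype).comp (F (W, q)).subtype).codRestrict W
        (fun x => x.2)
    refine vc_of_injective φ ?_ (hS W hW')
    intro x y hxy
    have := congrArg Subtype.val hxy
    apply Subtype.ext; apply Subtype.ext
    exact (MulAut.conj q.out).injective this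
  · intro g
    obtain ⟨V, hV, x, hx⟩ := hc g
    obtain ⟨h', hh'⟩ := QuotientGroup.mk_out_eq_mul H x
    refine ⟨F (V, (x : G ⧸ H)), Finset.mem_image_of_mem _ (by simp [hV]), h'⁻¹, ?_⟩
    change (QuotientGroup.mk x : G ⧸ H).out * ((h'⁻¹ * g * h'⁻¹⁻¹ : H) : G)
      * (QuotientGroup.mk x : G ⧸ H).out⁻¹ ∈ V
    rw [hh']
    convert hx using 1
    simp only [Subgroup.coe_mul, Subgroup.coe_inv, inv_inv]
    group

/-- Up to conjugation, a fixed power of every element lies in one of finitely many cyclic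
subgroups. -/
lemma bVCyc.exists_pow {G : Type*} [Group G] (h : bVCyc G) :
    ∃ (C : Finset G) (N : ℕ), 0 < N ∧ ∀ g : G, ∃ c ∈ C, ∃ k : ℤ, ∃ y : G,
      g ^ N = y * c ^ k * y⁻¹ := by
  classical
  obtain ⟨S, hS, hc⟩ := h
  have key : ∀ V ∈ S, ∃ (c : G) (N : ℕ), 0 < N ∧ ∀ v ∈ V, v ^ N ∈ Subgroup.zpowers c := by
    intro V hV
    obtain ⟨H, hcyc, hi⟩ := hS V hV
    obtain ⟨c, hc⟩ := hcyc.exists_generator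
    refine ⟨((c : V) : G), H.index.factorial, Nat.factorial_pos _, ?_⟩
    intro v hv
    obtain ⟨n, hn0, hn, hmem⟩ :=
      Subgroup.exists_pow_mem_of_index_ne_zero hi.index_ne_zero (⟨v, hv⟩ : V)
    obtain ⟨k, hk⟩ := Subgroup.mem_zpowers_iff.1 (hc ⟨_, hmem⟩)
    obtain ⟨j, hj⟩ := Nat.dvd_factorial hn0 hn
    have h2 : v ^ n = ((c : V) : G) ^ k := by
      have := congrArg (fun x : H => ((x : V) : G)) hk
      simpa using this.symm
    rw [hj, pow_mul, h2]
    exact Subgroup.pow_mem _ (Subgroup.zpow_mem _ (Subgroup.mem_zpowers _) _) _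
  choose! c N hN hmem using key
  refine ⟨S.image c, ∏ V ∈ S, N V, Finset.prod_pos hN, ?_⟩
  intro g
  obtain ⟨V, hV, x, hx⟩ := hc g
  obtain ⟨j, hj⟩ := Finset.dvd_prod_of_mem N hV
  have h1 := Subgroup.pow_mem _ (hmem V hV _ hx) j
  rw [← pow_mul, ← hj, conj_pow] at h1
  obtain ⟨k, hk⟩ := Subgroup.mem_zpowers_iff.1 h1
  refine ⟨c V, Finset.mem_image_of_mem _ hV, k, x⁻¹, ?_⟩
  rw [hk]; group

/-- In a commutative group conjugation is trivial, so the group is a finite union of virtually cyclic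
subgroups, one of which has finite index by B. H. Neumann's lemma. -/
lemma vc_of_bVCyc_comm {G : Type*} [CommGroup G] (h : bVCyc G) : VirtuallyCyclic G := by
  obtain ⟨S, hS, hc⟩ := h
  obtain ⟨V, hV, hfi⟩ := Subgroup.exists_finiteIndex_of_leftCoset_cover (G := G) (ι := Subgroup G)
    (H := id) (g := fun _ => 1) (s := S) (by
      ext g
      simp only [Set.mem_iUnion, Set.mem_univ, iff_true]
      obtain ⟨V, hV, x, hx⟩ := hc g
      refine ⟨V, hV, ?_⟩
      have : x * g * x⁻¹ = g := by rw [mul_comm x g]; group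
      rw [this] at hx
      simpa using hx)
  exact @vc_of_finiteIndex _ _ V hfi (hS V hV)

lemma finite_monoidHom_of_fg {G Q : Type*} [Group G] [Group Q] [Finite Q] (h : Group.FG G) :
    Finite (G →* Q) := by
  obtain ⟨S, hS⟩ := Group.fg_def.1 h
  refine Finite.of_injective (fun (f : G →* Q) (s : S) => f s) ?_
  intro f g hfg
  refine MonoidHom.eq_of_eqOn_dense hS ?_
  intro x hx
  exact congrFun hfg ⟨x, hx⟩

/-- In a finitely generated group, the subgroups of bounded finite index have a common subgroup
of finite index. -/
lemma exists_le_of_index_le {G : Type*} [Group G] (h : Group.FG G) (n : ℕ) :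
    ∃ G0 : Subgroup G, G0.FiniteIndex ∧
      ∀ M : Subgroup G, M.index ≠ 0 → M.index ≤ n → G0 ≤ M := by
  have : ∀ m : Fin (n + 1), Finite (G →* Equiv.Perm (Fin m)) :=
    fun m => finite_monoidHom_of_fg h
  refine ⟨⨅ p : (Σ m : Fin (n + 1), (G →* Equiv.Perm (Fin m))), p.2.ker, ?_, ?_⟩
  · exact Subgroup.finiteIndex_iInf (fun p => inferInstance)
  · intro M h0 hn
    have : M.FiniteIndex := ⟨h0⟩
    have : Finite (G ⧸ M) := M.finite_quotient_of_finiteIndex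
    have e : (G ⧸ M) ≃ Fin M.index := Finite.equivFinOfCardEq rfl
    let f : G →* Equiv.Perm (Fin M.index) :=
      e.permCongrHom.toMonoidHom.comp (MulAction.toPermHom G (G ⧸ M))
    refine (iInf_le (fun p : (Σ m : Fin (n + 1), (G →* Equiv.Perm (Fin m))) => p.2.ker)
      ⟨⟨M.index, by omega⟩, f⟩).trans ?_
    intro g hg
    have h1 : MulAction.toPermHom G (G ⧸ M) g = 1 := by
      apply e.permCongrHom.injective
      rw [map_one]
      exact hg
    have h2 := Equiv.congr_fun h1 ((1 : G) : G ⧸ M)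
    have h3 : ((g * 1 : G) : G ⧸ M) = ((1 : G) : G ⧸ M) := h2
    rw [mul_one, QuotientGroup.eq] at h3
    simpa using h3

end GroupLemmas

/-! ### Finitely generated commutative rings -/

section CommAlg

instance isJacobsonRing_int : IsJacobsonRing ℤ := by
  rw [isJacobsonRing_iff_prime_eq]
  intro P hP
  by_cases h0 : P = ⊥
  · subst h0
    rw [eq_bot_iff]
    intro x hx
    rw [Ideal.mem_bot]
    by_contra hx0
    obtain ⟨p, hp1, hp2⟩ := Nat.exists_infinite_primes (x.natAbs + 1)
    rw [Ideal.jacobson, Submodule.mem_sInf] at hx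
    have hmax : (Ideal.span {(p : ℤ)}).IsMaximal :=
      PrincipalIdealRing.isMaximal_of_irreducible (Nat.prime_iff_prime_int.1 hp2).irreducible
    have h1 := hx _ ⟨bot_le, hmax⟩
    rw [Ideal.mem_span_singleton] at h1
    have := Int.le_of_dvd (abs_pos.2 hx0) ((dvd_abs _ _).2 h1)
    rw [Int.abs_eq_natAbs] at this
    omega
  · have := hP.isMaximal h0
    exact Ideal.jacobson_eq_self_of_isMaximal

lemma finite_field_of_finiteType (k : Type*) [Field k] [Algebra.FiniteType ℤ k] : Finite k := by
  have h1 : Module.Finite ℤ k := finite_of_finite_type_of_isJacobsonRing ℤ k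
  have hintg : Algebra.IsIntegral ℤ k := inferInstance
  by_cases hinj : Function.Injective (algebraMap ℤ k)
  · exfalso
    exact Int.not_isField (isField_of_isIntegral_of_isField hinj (Field.toIsField k))
  · obtain ⟨p, hp⟩ := CharP.exists k
    have hp0 : p ≠ 0 := by
      rintro rfl
      have := CharP.charP_to_charZero k
      exact hinj (by simpa using (Int.cast_injective (α := k)))
    have : NeZero p := ⟨hp0⟩
    let _ := ZMod.algebra k p
    have : IsScalarTower ℤ (ZMod p) k := IsScalarTower.of_algebraMap_eq' (RingHom.ext_int _ _)
    have : Module.Finite (ZMod p) k := Module.Finite.of_restrictScalars_finite ℤ _ _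
    exact Module.finite_of_finite (ZMod p)

lemma finite_quotient_of_isMaximal {R : Type*} [CommRing R] [Algebra.FiniteType ℤ R]
    (m : Ideal R) [hm : m.IsMaximal] : Finite (R ⧸ m) := by
  have h1 : Algebra.FiniteType ℤ (R ⧸ m) :=
    Algebra.FiniteType.of_surjective (Ideal.Quotient.mkₐ ℤ m) (Ideal.Quotient.mkₐ_surjective ℤ m)
  let _ := Ideal.Quotient.field m
  exact @finite_field_of_finiteType (R ⧸ m) _ h1

lemma exists_isMaximal_notMem {R : Type*} [CommRing R] [Algebra.FiniteType ℤ R]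
    (P : Ideal R) [hP : P.IsPrime] {a : R} (ha : a ∉ P) :
    ∃ m : Ideal R, m.IsMaximal ∧ P ≤ m ∧ a ∉ m := by
  have : IsJacobsonRing R := isJacobsonRing_of_finiteType (A := ℤ)
  have h1 : P.jacobson = P := IsJacobsonRing.out ‹_› hP.isRadical
  rw [← h1, Ideal.jacobson, Submodule.mem_sInf] at ha
  push Not at ha
  obtain ⟨m, ⟨h2, h3⟩, h4⟩ := ha
  exact ⟨m, h3, h2, h4⟩

/-- Multiplying a submodule `I • M` by a maximal ideal `m` containing a prime `P ⊇ Ann M`, where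
`I` is not inside `P`, increases the size of the quotient at least by the factor `|R ⧸ m|`:
`m • I • M ≠ I • M` by Nakayama's lemma. -/
lemma card_mul_le {R M : Type*} [CommRing R] [Algebra.FiniteType ℤ R] [AddCommGroup M] [Module R M]
    [Module.Finite R M] (P : Ideal R) [hP : P.IsPrime]
    (hann : ∀ r : R, (∀ x : M, r • x = 0) → r ∈ P) (m I : Ideal R) [hm : m.IsMaximal]
    (hPm : P ≤ m) (hI : ¬ I ≤ P)
    [hfin : Finite (M ⧸ ((m * I) • ⊤ : Submodule R M))] :
    Nat.card (R ⧸ m) * Nat.card (M ⧸ (I • ⊤ : Submodule R M)) ≤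
      Nat.card (M ⧸ ((m * I) • ⊤ : Submodule R M)) := by
  have : IsNoetherianRing R := Algebra.FiniteType.isNoetherianRing ℤ R
  set N : Submodule R M := I • ⊤ with hN
  have hmI : ((m * I) • ⊤ : Submodule R M) = m • N := by rw [hN, Submodule.mul_smul]
  have hle : m • N ≤ N := Submodule.smul_le_right
  have hnot : ¬ N ≤ m • N := by
    intro hh
    obtain ⟨r, hr1, hr2⟩ := Submodule.exists_sub_one_mem_and_smul_eq_zero_of_fg_of_le_smul m N
      (IsNoetherian.noetherian N) hh
    have hrP : r ∉ P := by
      intro hr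
      exact hm.ne_top ((Ideal.eq_top_iff_one _).2 (by
        have := m.sub_mem (hPm hr) hr1
        simpa using this))
    apply hI
    intro i hi
    have : r * i ∈ P := hann _ (fun x => by
      rw [mul_smul]
      exact hr2 _ (Submodule.smul_mem_smul hi trivial))
    exact (hP.mem_or_mem this).resolve_left hrP
  obtain ⟨n, hnN, hn⟩ := SetLike.not_le_iff_exists.1 hnot
  rw [hmI] at hfin ⊢
  rw [← Submodule.card_quotient_mul_card_quotient N (m • N) hle]
  refine Nat.mul_le_mul_right _ ?_
  let f : R →ₗ[R] (M ⧸ (m • N)) := (m • N).mkQ.comp (LinearMap.toSpanSingleton R M n)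
  have hker : LinearMap.ker f = m := by
    refine (hm.eq_of_le ?_ ?_).symm
    · intro h1
      have : (1 : R) ∈ LinearMap.ker f := by
        rw [show LinearMap.ker f = ⊤ from h1]; trivial
      apply hn
      simpa [f] using this
    · intro a ha
      simp only [f, LinearMap.mem_ker, LinearMap.comp_apply, LinearMap.toSpanSingleton_apply,
        Submodule.mkQ_apply, Submodule.Quotient.mk_eq_zero]
      exact Submodule.smul_mem_smul ha hnN
  have e : (R ⧸ m) ≃ LinearMap.range f :=
    ((Submodule.quotEquivOfEq _ _ hker.symm).trans f.quotKerEquivRange).toEquiv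
  rw [Nat.card_congr e]
  have hsub : LinearMap.range f ≤ N.map (m • N).mkQ := by
    rintro _ ⟨a, rfl⟩
    exact ⟨a • n, N.smul_mem _ hnN, by simp [f]⟩
  exact Nat.card_le_card_of_injective _ (Submodule.inclusion_injective hsub)

/-- Every infinite noetherian module has a just infinite quotient, i.e. an infinite quotient all of
whose proper quotients are finite. -/
lemma exists_just_infinite {R M : Type*} [CommRing R] [AddCommGroup M] [Module R M]
    [IsNoetherian R M] (h : Infinite M) :
    ∃ N : Submodule R M, Infinite (M ⧸ N) ∧ ∀ N', N < N' → Finite (M ⧸ N') := by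
  have hne : {N : Submodule R M | Infinite (M ⧸ N)}.Nonempty :=
    ⟨⊥, (Submodule.quotEquivOfEqBot (⊥ : Submodule R M) rfl).toEquiv.infinite_iff.2 h⟩
  obtain ⟨N, hN, hmax⟩ := set_has_maximal_iff_noetherian.2 ‹IsNoetherian R M› _ hne
  refine ⟨N, hN, fun N' hlt => ?_⟩
  by_contra hcon
  exact hmax N' (not_finite_iff_infinite.1 hcon) hlt

/-- If `r s` kills a just infinite `M` but neither `r` nor `s` does, then `s M` is a nonzero submodule
inside the kernel of `r`; both `M ⧸ ker r ≅ r M` and `M ⧸ r M` are then finite, hence so is `M`. -/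
lemma annihilator_isPrime_of_just_infinite {R M : Type*} [CommRing R] [AddCommGroup M] [Module R M]
    (h : Infinite M) (hj : ∀ N' : Submodule R M, N' ≠ ⊥ → Finite (M ⧸ N')) :
    (Module.annihilator R M).IsPrime := by
  constructor
  · intro h1
    have : (1 : R) ∈ Module.annihilator R M := by rw [h1]; trivial
    rw [Module.mem_annihilator] at this
    have : Subsingleton M := ⟨fun a b => by
      rw [← one_smul R a, ← one_smul R b, this, this]⟩
    exact not_finite M
  · intro r s hrs
    by_contra hcon
    push Not at hcon
    obtain ⟨hr, hs⟩ := hcon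
    let fr : M →ₗ[R] M := LinearMap.lsmul R M r
    let fs : M →ₗ[R] M := LinearMap.lsmul R M s
    have h1 : ∀ (a : R), a ∉ Module.annihilator R M →
        LinearMap.range (LinearMap.lsmul R M a) ≠ ⊥ := by
      intro a ha hb
      apply ha
      rw [Module.mem_annihilator]
      intro x
      have : LinearMap.lsmul R M a x ∈ LinearMap.range (LinearMap.lsmul R M a) := ⟨x, rfl⟩
      rw [hb] at this
      simpa using this
    have f1 := hj _ (h1 r hr)
    have f2 := hj _ (h1 s hs)
    have hle : LinearMap.range fs ≤ LinearMap.ker fr := by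
      rintro _ ⟨x, rfl⟩
      have := Module.mem_annihilator.1 hrs x
      simpa [fr, fs, mul_smul, smul_comm s r] using this
    have f3 : Finite (M ⧸ LinearMap.ker fr) :=
      Finite.of_surjective _ (Submodule.factor_surjective hle)
    have f4 : Finite (LinearMap.range fr) := Finite.of_equiv _ fr.quotKerEquivRange.toEquiv
    have : Finite M := by
      have f5 : Finite (LinearMap.range fr).toAddSubgroup := f4
      have f6 : Finite (M ⧸ (LinearMap.range fr).toAddSubgroup) := f1
      exact Finite.of_addSubgroup_quotient (LinearMap.range fr).toAddSubgroup
    exact not_finite M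

end CommAlg

/-! ### Modules whose quotients by `t ^ n - 1` grow slowly -/

section FixedPoints

lemma finite_quotient_of_le {R M : Type*} [CommRing R] [AddCommGroup M] [Module R M]
    {N N' : Submodule R M} (h : N ≤ N') [Finite (M ⧸ N)] :
    Finite (M ⧸ N') := Finite.of_surjective _ (Submodule.factor_surjective h)

lemma card_quotient_le_of_le {R M : Type*} [CommRing R] [AddCommGroup M] [Module R M]
    {N N' : Submodule R M} (h : N ≤ N') [Finite (M ⧸ N)] :
    Nat.card (M ⧸ N') ≤ Nat.card (M ⧸ N) :=
  Nat.card_le_card_of_surjective _ (Submodule.factor_surjective h)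

variable {R M : Type*} [CommRing R] [Algebra.FiniteType ℤ R] [AddCommGroup M] [Module R M]
  [Module.Finite R M]

/-- Iteration of `card_mul_le` along a product of maximal ideals, with repetitions allowed. -/
lemma prod_card_le (P : Ideal R) [hP : P.IsPrime]
    (hann : ∀ r : R, (∀ x : M, r • x = 0) → r ∈ P) (s : Multiset (Ideal R)) :
    (∀ m ∈ s, m.IsMaximal ∧ P ≤ m ∧ ¬ m ≤ P) →
    Finite (M ⧸ (s.prod • ⊤ : Submodule R M)) →
    (s.map (fun m => Nat.card (R ⧸ m))).prod ≤ Nat.card (M ⧸ (s.prod • ⊤ : Submodule R M)) := by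
  induction s using Multiset.induction_on with
  | empty =>
    intro _ hfin
    simp
  | cons m s ih =>
    intro hs hfin
    rw [Multiset.prod_cons] at hfin
    rw [Multiset.map_cons, Multiset.prod_cons, Multiset.prod_cons]
    have hle : ((m * s.prod) • ⊤ : Submodule R M) ≤ s.prod • ⊤ :=
      Submodule.smul_mono_left Ideal.mul_le_right
    have h1 := ih (fun m' h' => hs m' (Multiset.mem_cons_of_mem h')) (finite_quotient_of_le hle)
    obtain ⟨hm1, hm2, hm3⟩ := hs m (Multiset.mem_cons_self _ _)
    refine le_trans (Nat.mul_le_mul_left _ h1) (card_mul_le P hann m s.prod hm2 ?_)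
    rw [hP.multiset_prod_le]
    rintro ⟨I, hI, hle⟩
    exact (hs I (Multiset.mem_cons_of_mem hI)).2.2 hle

lemma pow_card_sub_one_sub_one_mem (m : Ideal R) [hm : m.IsMaximal] (t : Rˣ) {n : ℕ}
    (h : Nat.card (R ⧸ m) - 1 ∣ n) : (t : R) ^ n - 1 ∈ m := by
  obtain ⟨k, rfl⟩ := h
  let _ := Ideal.Quotient.field m
  have : Finite (R ⧸ m) := finite_quotient_of_isMaximal m
  let _ := Fintype.ofFinite (R ⧸ m)
  rw [← Ideal.Quotient.eq_zero_iff_mem, map_sub, map_pow, map_one, pow_mul,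
    Nat.card_eq_fintype_card, FiniteField.pow_card_sub_one_eq_one, one_pow, sub_self]
  exact (t.isUnit.map (Ideal.Quotient.mk m)).ne_zero

lemma two_le_card_quotient (m : Ideal R) [hm : m.IsMaximal] : 2 ≤ Nat.card (R ⧸ m) := by
  have : Finite (R ⧸ m) := finite_quotient_of_isMaximal m
  have : Nontrivial (R ⧸ m) := Ideal.Quotient.nontrivial_iff.2 hm.ne_top
  exact Finite.one_lt_card

lemma odd_card_quotient (m : Ideal R) [hm : m.IsMaximal] (h2 : (2 : R) ∉ m) :
    Nat.card (R ⧸ m) % 2 = 1 := by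
  let _ := Ideal.Quotient.field m
  have : Finite (R ⧸ m) := finite_quotient_of_isMaximal m
  let _ := Fintype.ofFinite (R ⧸ m)
  rw [Nat.card_eq_fintype_card]
  refine FiniteField.odd_card_of_char_ne_two (fun h => h2 ?_)
  rw [← Ideal.Quotient.eq_zero_iff_mem]
  have := ringChar.Nat.cast_ringChar (R := R ⧸ m)
  rw [h] at this
  rw [map_ofNat]
  exact_mod_cast this

/-- If `t ^ n - 1` lies in a product of maximal ideals above `P = Ann M` up to elements killing `M`,
the linear bound on `|M ⧸ (t ^ n - 1) M|` bounds the product of the residue cardinalities. -/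
lemma prod_card_le_of_bound (P : Ideal R) [hP : P.IsPrime]
    (hann : ∀ r : R, (∀ x : M, r • x = 0) ↔ r ∈ P) (t : Rˣ) (C : ℕ)
    (h : ∀ n : ℕ, 0 < n → Finite (M ⧸ (Ideal.span {(t : R) ^ n - 1} • ⊤ : Submodule R M)) ∧
      Nat.card (M ⧸ (Ideal.span {(t : R) ^ n - 1} • ⊤ : Submodule R M)) ≤ C * n)
    (s : Multiset (Ideal R)) (hs : ∀ m ∈ s, m.IsMaximal ∧ P ≤ m ∧ ¬ m ≤ P) (n : ℕ) (hn : 0 < n)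
    (a : R) (ha : a ∈ s.prod) (hat : (t : R) ^ n - 1 - a ∈ P) :
    (s.map (fun m => Nat.card (R ⧸ m))).prod ≤ C * n := by
  obtain ⟨h1, h2⟩ := h n hn
  have hle : (Ideal.span {(t : R) ^ n - 1} • ⊤ : Submodule R M) ≤ s.prod • ⊤ := by
    rw [Submodule.smul_le]
    intro r hr x _
    obtain ⟨b, rfl⟩ := Ideal.mem_span_singleton'.1 hr
    have h3 : ((t : R) ^ n - 1) • x = a • x := by
      have := (hann _).2 hat x
      rwa [sub_smul, sub_eq_zero] at this
    rw [mul_smul, h3, ← mul_smul, mul_comm, mul_smul]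
    exact Submodule.smul_mem_smul ha trivial
  exact (prod_card_le P (fun r => (hann r).1) s hs (finite_quotient_of_le hle)).trans
    ((card_quotient_le_of_le hle).trans h2)

/-- The case of characteristic two. With `q = |R ⧸ m|` one has
`t ^ ((q - 1) 2 ^ k) - 1 ≡ (t ^ (q - 1) - 1) ^ (2 ^ k)` modulo `P`, which lies in `m ^ (2 ^ k)`; so the
quotient has at least `q ^ (2 ^ k)` elements, against a bound linear in `2 ^ k`. -/
lemma false_of_two_mem (P : Ideal R) [hP : P.IsPrime]
    (hann : ∀ r : R, (∀ x : M, r • x = 0) ↔ r ∈ P) (t : Rˣ) (C : ℕ)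
    (h : ∀ n : ℕ, 0 < n → Finite (M ⧸ (Ideal.span {(t : R) ^ n - 1} • ⊤ : Submodule R M)) ∧
      Nat.card (M ⧸ (Ideal.span {(t : R) ^ n - 1} • ⊤ : Submodule R M)) ≤ C * n)
    (hnm : ¬ P.IsMaximal) (h2 : (2 : R) ∈ P) : False := by
  obtain ⟨m, hm, hPm, -⟩ := exists_isMaximal_notMem P hP.one_notMem
  have hmP : ¬ m ≤ P := fun hle => hnm (le_antisymm hle hPm ▸ hm)
  set q := Nat.card (R ⧸ m) with hq
  have hq2 : 2 ≤ q := two_le_card_quotient m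
  have key : ∀ k : ℕ, 2 ^ 2 ^ k ≤ C * q * 2 ^ k := by
    intro k
    have h3 := prod_card_le_of_bound P hann t C h (Multiset.replicate (2 ^ k) m)
      (fun m' hm' => by rw [Multiset.eq_of_mem_replicate hm']; exact ⟨hm, hPm, hmP⟩)
      ((q - 1) * 2 ^ k) (by have : 0 < q - 1 := by omega
                            positivity) (((t : R) ^ (q - 1) - 1) ^ 2 ^ k)
      (by
        rw [Multiset.prod_replicate]
        exact Ideal.pow_mem_pow (pow_card_sub_one_sub_one_mem m t dvd_rfl) _)
      (by
        obtain ⟨r, hr⟩ := exists_add_pow_prime_pow_eq Nat.prime_two ((t : R) ^ (q - 1) - 1) 1 k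
        rw [sub_add_cancel, ← pow_mul, one_pow] at hr
        rw [hr]
        convert P.mul_mem_right (((t : R) ^ (q - 1) - 1) * r) h2 using 1
        push_cast
        ring)
    rw [Multiset.map_replicate, Multiset.prod_replicate] at h3
    calc 2 ^ 2 ^ k ≤ q ^ 2 ^ k := Nat.pow_le_pow_left hq2 _
      _ ≤ C * ((q - 1) * 2 ^ k) := h3
      _ ≤ C * (q * 2 ^ k) := by gcongr; omega
      _ = _ := by ring
  have h4 := key (C * q + 1)
  have h5 : C * q < 2 ^ (C * q) := Nat.lt_two_pow_self
  have h6 : C * q + 1 + (C * q) ≤ 2 ^ (C * q + 1) := by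
    rw [pow_succ]; omega
  have h7 : 2 ^ (C * q + 1 + C * q) ≤ C * q * 2 ^ (C * q + 1) :=
    (Nat.pow_le_pow_right (by norm_num) h6).trans h4
  rw [pow_add, mul_comm] at h7
  have := Nat.le_of_mul_le_mul_right h7 (by positivity)
  omega

/-- A prime which is not maximal lies in arbitrarily many maximal ideals avoiding a given `a ∉ P`. -/
lemma exists_finset_isMaximal (P : Ideal R) [hP : P.IsPrime] (hnm : ¬ P.IsMaximal) {a : R}
    (ha : a ∉ P) (n : ℕ) : ∃ T : Finset (Ideal R), T.card = n ∧
      ∀ m ∈ T, m.IsMaximal ∧ P ≤ m ∧ ¬ m ≤ P ∧ a ∉ m := by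
  classical
  induction n with
  | zero => exact ⟨∅, by simp⟩
  | succ n ih =>
    obtain ⟨T, hT, hT2⟩ := ih
    have : ¬ ∏ m ∈ T, m ≤ P := by
      rw [hP.prod_le]
      rintro ⟨m, hm, hle⟩
      exact (hT2 m hm).2.2.1 hle
    obtain ⟨b, hb, hbP⟩ := SetLike.not_le_iff_exists.1 this
    obtain ⟨m, hm, hPm, hab⟩ := exists_isMaximal_notMem P (hP.mul_notMem ha hbP)
    refine ⟨insert m T, ?_, ?_⟩
    · rw [Finset.card_insert_of_notMem, hT]
      intro hmT
      exact hab (m.mul_mem_left _ ((Ideal.prod_le_inf.trans (Finset.inf_le hmT)) hb))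
    · intro m' hm'
      rcases Finset.mem_insert.1 hm' with rfl | hmem
      · exact ⟨hm, hPm, fun hle => hnm (le_antisymm hle hPm ▸ hm),
          fun h => hab (m'.mul_mem_right _ h)⟩
      · exact hT2 _ hmem

/-- The case of characteristic different from two. For `2 C` distinct maximal ideals `m` of odd residue
cardinality `q m`, put `n = ∏ (q m - 1) / 2`. Then `t ^ (2 n) - 1` lies in all of them, so
`∏ q m ≤ 2 C n`, whereas `∏ q m ≥ 2 ^ (2 C) n`: the common factor `2` of the numbers `q m - 1`
makes the exponent `2 n` small compared with `∏ q m`. -/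
lemma false_of_two_notMem (P : Ideal R) [hP : P.IsPrime]
    (hann : ∀ r : R, (∀ x : M, r • x = 0) ↔ r ∈ P) (t : Rˣ) (C : ℕ)
    (h : ∀ n : ℕ, 0 < n → Finite (M ⧸ (Ideal.span {(t : R) ^ n - 1} • ⊤ : Submodule R M)) ∧
      Nat.card (M ⧸ (Ideal.span {(t : R) ^ n - 1} • ⊤ : Submodule R M)) ≤ C * n)
    (hnm : ¬ P.IsMaximal) (h2 : (2 : R) ∉ P) : False := by
  obtain ⟨T, hTc, hT⟩ := exists_finset_isMaximal P hnm h2 (2 * C)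
  let q : Ideal R → ℕ := fun m => Nat.card (R ⧸ m)
  have hq : ∀ m ∈ T, 2 * ((q m - 1) / 2) = q m - 1 ∧ 2 ≤ q m ∧ 0 < (q m - 1) / 2 := by
    intro m hm
    have := (hT m hm).1
    have h3 : q m % 2 = 1 := odd_card_quotient m (hT m hm).2.2.2
    have h4 : 2 ≤ q m := two_le_card_quotient m
    omega
  set n := ∏ m ∈ T, (q m - 1) / 2 with hn
  have hn0 : 0 < n := Finset.prod_pos (fun m hm => (hq m hm).2.2)
  have hmem : (t : R) ^ (2 * n) - 1 ∈ T.val.prod := by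
    rw [Finset.prod_val T, Ideal.prod_eq_iInf_of_pairwise_isCoprime]
    · simp only [Ideal.mem_iInf]
      intro m hm
      have := (hT m hm).1
      refine pow_card_sub_one_sub_one_mem m t ?_
      rw [show Nat.card (R ⧸ m) - 1 = 2 * ((q m - 1) / 2) from (hq m hm).1.symm]
      exact Nat.mul_dvd_mul_left _ (Finset.dvd_prod_of_mem _ hm)
    · intro m hm m' hm' hne
      have := (hT m hm).1
      have := (hT m' hm').1
      exact Ideal.isCoprime_of_isMaximal (I := m) (J := m') hne
  have h3 := prod_card_le_of_bound P hann t C h T.val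
    (fun m hm => ⟨(hT m hm).1, (hT m hm).2.1, (hT m hm).2.2.1⟩) (2 * n) (by omega) _ hmem
    (by simp)
  have h4 : ∏ m ∈ T, q m ≤ C * (2 * n) := h3
  have h5 : 2 ^ (2 * C) * n ≤ ∏ m ∈ T, q m := by
    rw [← hTc, ← Finset.prod_const, hn, ← Finset.prod_mul_distrib]
    refine Finset.prod_le_prod' (fun m hm => ?_)
    have := hq m hm
    omega
  have h6 : 2 ^ (2 * C) * n ≤ (2 * C) * n := (h5.trans h4).trans (by ring_nf; rfl)
  have := Nat.le_of_mul_le_mul_right h6 hn0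
  have := Nat.lt_two_pow_self (n := 2 * C)
  omega

/-- A finitely generated module over a finitely generated commutative ring with an automorphism
`t` for which `M ⧸ (t ^ n - 1) M` grows at most linearly in `n` is finite. After passing to a just
infinite quotient, the annihilator is a prime which is not maximal. -/
lemma finite_of_card_quotient_le (t : Rˣ) (C : ℕ)
    (h : ∀ n : ℕ, 0 < n → Finite (M ⧸ (Ideal.span {(t : R) ^ n - 1} • ⊤ : Submodule R M)) ∧
      Nat.card (M ⧸ (Ideal.span {(t : R) ^ n - 1} • ⊤ : Submodule R M)) ≤ C * n) : Finite M := by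
  by_contra hfin
  rw [not_finite_iff_infinite] at hfin
  have : IsNoetherianRing R := Algebra.FiniteType.isNoetherianRing ℤ R
  obtain ⟨N, hN, hmax⟩ := exists_just_infinite (R := R) hfin
  have hj : ∀ N' : Submodule R (M ⧸ N), N' ≠ ⊥ → Finite ((M ⧸ N) ⧸ N') := by
    intro N' hN'
    have hlt : N < N'.comap N.mkQ := by
      refine lt_of_le_of_ne (fun x hx => ?_) (fun heq => hN' ?_)
      · simp [(Submodule.Quotient.mk_eq_zero N).2 hx]
      · rw [eq_bot_iff]
        intro y hy
        obtain ⟨x, rfl⟩ := N.mkQ_surjective y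
        have : x ∈ N := by rw [heq]; exact hy
        simpa using this
    have := hmax _ hlt
    let f : M →ₗ[R] ((M ⧸ N) ⧸ N') := N'.mkQ.comp N.mkQ
    have hle : N'.comap N.mkQ ≤ LinearMap.ker f := by
      intro x hx
      simpa [f] using hx
    refine Finite.of_surjective (Submodule.liftQ _ f hle) ?_
    rw [← LinearMap.range_eq_top, Submodule.range_liftQ, LinearMap.range_eq_top]
    exact (N'.mkQ_surjective).comp N.mkQ_surjective
  have hP := annihilator_isPrime_of_just_infinite hN hj
  set P := Module.annihilator R (M ⧸ N) with hPdef
  have hann : ∀ r : R, (∀ x : M ⧸ N, r • x = 0) ↔ r ∈ P := fun r =>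
    Module.mem_annihilator.symm
  have hnm : ¬ P.IsMaximal := by
    intro hmx
    have : Finite (R ⧸ P) := finite_quotient_of_isMaximal P
    have : Finite (M ⧸ N) := by
      let _ : Module (R ⧸ P) (M ⧸ N) := Module.quotientAnnihilator
      have : IsScalarTower R (R ⧸ P) (M ⧸ N) := ⟨fun r x y => by
        obtain ⟨x, rfl⟩ := Ideal.Quotient.mk_surjective x
        exact mul_smul r x y⟩
      have : Module.Finite (R ⧸ P) (M ⧸ N) := Module.Finite.of_restrictScalars_finite R _ _
      exact Module.finite_of_finite (R ⧸ P)
    exact not_finite (M ⧸ N)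
  have h' : ∀ n : ℕ, 0 < n →
      Finite ((M ⧸ N) ⧸ (Ideal.span {(t : R) ^ n - 1} • ⊤ : Submodule R (M ⧸ N))) ∧
      Nat.card ((M ⧸ N) ⧸ (Ideal.span {(t : R) ^ n - 1} • ⊤ : Submodule R (M ⧸ N))) ≤ C * n := by
    intro n hn
    obtain ⟨h1, h2⟩ := h n hn
    let I := Ideal.span {(t : R) ^ n - 1}
    let f : M →ₗ[R] ((M ⧸ N) ⧸ (I • ⊤ : Submodule R (M ⧸ N))) :=
      (I • ⊤ : Submodule R (M ⧸ N)).mkQ.comp N.mkQ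
    have hle : (I • ⊤ : Submodule R M) ≤ LinearMap.ker f := by
      rw [Submodule.smul_le]
      intro r hr x _
      simp only [f, LinearMap.mem_ker, LinearMap.comp_apply, map_smul]
      rw [← map_smul, Submodule.mkQ_apply, Submodule.Quotient.mk_eq_zero]
      exact Submodule.smul_mem_smul hr trivial
    have hsurj : Function.Surjective (Submodule.liftQ _ f hle) := by
      rw [← LinearMap.range_eq_top, Submodule.range_liftQ, LinearMap.range_eq_top]
      exact (Submodule.mkQ_surjective _).comp N.mkQ_surjective
    exact ⟨Finite.of_surjective _ hsurj, (Nat.card_le_card_of_surjective _ hsurj).trans h2⟩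
  by_cases h2 : (2 : R) ∈ P
  · exact false_of_two_mem P hann t C h' hnm h2
  · exact false_of_two_notMem P hann t C h' hnm h2

end FixedPoints

/-! ### Solvable groups with bVCyc -/

section Solvable

open LaurentPolynomial in
/-- For `H = M ⋊ ℤ`, presented by the projection `τ` to `ℤ` and the cocycle `α : H → M`, an element
`(a, n)` is conjugate into one of finitely many virtually cyclic subgroups, each of which has
boundedly many elements over `n`; this bounds `M ⧸ (t ^ n - 1) M` linearly in `n`. -/
lemma finite_of_cocycle {H M : Type*} [Group H] [AddCommGroup M]
    (Θ : Multiplicative ℤ →* Module.End ℤ M) (τ : H →* Multiplicative ℤ) (α : H → M)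
    (h1 : ∀ x y, α (x * y) = α x + Θ (τ x) (α y))
    (h2 : ∀ a n, ∃ x, α x = a ∧ τ x = n) (hfg : Group.FG H) (hb : bVCyc H) : Finite M := by
  classical
  let Φ : ℤ[T;T⁻¹] →ₐ[ℤ] Module.End ℤ M := AddMonoidAlgebra.lift ℤ (Module.End ℤ M) ℤ Θ
  let _ : Module ℤ[T;T⁻¹] M := Module.compHom M Φ.toRingHom
  have hsmul : ∀ (n : ℤ) (a : M), (T n : ℤ[T;T⁻¹]) • a = Θ (Multiplicative.ofAdd n) a := by
    intro n a
    change Φ (T n) a = _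
    rw [T, AddMonoidAlgebra.lift_single, one_smul]
  have h1' : ∀ x y, α (x * y) = α x + (T (τ x).toAdd : ℤ[T;T⁻¹]) • (α y) := by
    intro x y
    rw [h1, hsmul]
    rfl
  have hone : α 1 = 0 := by
    have := h1' 1 1
    simpa using this
  have hinv : ∀ x, α x⁻¹ = - ((T (- (τ x).toAdd) : ℤ[T;T⁻¹]) • (α x)) := by
    intro x
    have := h1' x⁻¹ x
    rw [inv_mul_cancel, hone, map_inv, toAdd_inv] at this
    exact eq_neg_of_add_eq_zero_left this.symm
  have hfin : Module.Finite ℤ[T;T⁻¹] M := by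
    obtain ⟨S, hS⟩ := Group.fg_def.1 hfg
    refine ⟨⟨S.image α, ?_⟩⟩
    rw [eq_top_iff]
    intro a _
    set N := Submodule.span ℤ[T;T⁻¹] ((S.image α : Finset M) : Set M) with hN
    obtain ⟨x, hx, -⟩ := h2 a 1
    rw [← hx]
    clear hx
    have hx : x ∈ Subgroup.closure (S : Set H) := by rw [hS]; trivial
    induction hx using Subgroup.closure_induction with
    | mem s hs => exact Submodule.subset_span (by
        rw [Finset.coe_image]; exact ⟨s, hs, rfl⟩)
    | one => rw [hone]; exact N.zero_mem
    | mul x y _ _ hx hy => rw [h1']; exact N.add_mem hx (N.smul_mem _ hy)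
    | inv x _ hx => rw [hinv]; exact N.neg_mem (N.smul_mem _ hx)
  obtain ⟨S, hS, hcov⟩ := hb
  choose! Z hZc hZf using hS
  have hfinZ : ∀ V : S, Finite (V.1 ⧸ Z V.1) := fun V => by
    have := hZf V.1 V.2
    exact Subgroup.finite_quotient_of_finiteIndex
  -- elements of `V` over `n ≠ 0` are determined by their class modulo the cyclic subgroup `Z V`:
  -- a power of `v` is a nontrivial element of `Z V` over a nonzero integer, so `τ` is injective there
  have hinj : ∀ V ∈ S, ∀ (v v' : V) (n : ℤ), n ≠ 0 → (τ v).toAdd = n → (τ v').toAdd = n →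
      (v : V ⧸ Z V) = v' → v = v' := by
    intro V hV v v' n hn hv hv' hvv
    rw [QuotientGroup.eq] at hvv
    have := hZc V hV
    have := hZf V hV
    obtain ⟨c, hc⟩ := IsCyclic.exists_generator (α := Z V)
    obtain ⟨k, hk0, -, hk⟩ := Subgroup.exists_pow_mem_of_index_ne_zero
      (Subgroup.FiniteIndex.index_ne_zero (H := Z V)) v
    obtain ⟨i, hi⟩ := Subgroup.mem_zpowers_iff.1 (hc ⟨_, hvv⟩)
    obtain ⟨j, hj⟩ := Subgroup.mem_zpowers_iff.1 (hc ⟨_, hk⟩)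
    have hi' : ((c : V) : H) ^ i = (v : H)⁻¹ * v' := by
      have := congrArg (fun z : Z V => ((z : V) : H)) hi
      simpa using this
    have hj' : ((c : V) : H) ^ j = (v : H) ^ k := by
      have := congrArg (fun z : Z V => ((z : V) : H)) hj
      simpa using this
    have ei := congrArg (fun z => (τ z).toAdd) hi'
    have ej := congrArg (fun z => (τ z).toAdd) hj'
    simp only [map_zpow, map_mul, map_inv, map_pow, toAdd_zpow, toAdd_mul, toAdd_inv, toAdd_pow,
      hv, hv'] at ei ej
    have hcn : (τ ((c : V) : H)).toAdd ≠ 0 := by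
      intro h0
      rw [h0] at ej
      simp at ej
      omega
    have hi0 : i = 0 := by
      simpa [hcn] using ei
    rw [hi0, zpow_zero] at hi'
    exact Subtype.ext (inv_mul_eq_one.1 hi'.symm)
  obtain ⟨t, ht⟩ := isUnit_T (R := ℤ) 1
  have htn : ∀ n : ℕ, (t : ℤ[T;T⁻¹]) ^ n = T n := fun n => by rw [ht, T_pow, mul_one]
  have hft : @Algebra.FiniteType ℤ ℤ[T;T⁻¹] _ _ (Ring.toIntAlgebra _) := by
    have := AddMonoidAlgebra.finiteType_of_fg (R := ℤ) (M := ℤ)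
    rwa [Subsingleton.elim (Ring.toIntAlgebra ℤ[T;T⁻¹]) AddMonoidAlgebra.algebra]
  refine finite_of_card_quotient_le (R := ℤ[T;T⁻¹]) t (Nat.card (Σ V : S, (V.1 ⧸ Z V.1))) ?_
  intro n hn
  set N : Submodule ℤ[T;T⁻¹] M := Ideal.span {(t : ℤ[T;T⁻¹]) ^ n - 1} • ⊤ with hN
  have hmod : ∀ (j : ℤ) (a : M), Submodule.Quotient.mk (p := N) ((T j : ℤ[T;T⁻¹]) • a) =
      Submodule.Quotient.mk ((T (j % n) : ℤ[T;T⁻¹]) • a) := by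
    have hper : ∀ a : M, Submodule.Quotient.mk (p := N) ((T n : ℤ[T;T⁻¹]) • a) =
        Submodule.Quotient.mk a := by
      intro a
      rw [Submodule.Quotient.eq]
      have : (T n : ℤ[T;T⁻¹]) • a - a = ((t : ℤ[T;T⁻¹]) ^ n - 1) • a := by
        rw [htn, sub_smul, one_smul]
      rw [this]
      exact Submodule.smul_mem_smul (Ideal.mem_span_singleton_self _) trivial
    have hper' : ∀ (k : ℤ) (a : M), Submodule.Quotient.mk (p := N) ((T (n * k) : ℤ[T;T⁻¹]) • a) =
        Submodule.Quotient.mk a := by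
      intro k a
      induction k using Int.induction_on with
      | zero => simp
      | succ i ih =>
        rw [mul_add, mul_one, add_comm, T_add, mul_smul, hper, ih]
      | pred i ih =>
        rw [← ih, ← hper, smul_smul, ← T_add]
        congr 3
        ring
    intro j a
    conv_lhs => rw [← Int.mul_ediv_add_emod j n, T_add, mul_smul]
    exact hper' _ _
  let Ψ : (Σ V : S, (V.1 ⧸ Z V.1)) × Fin n → M ⧸ N := fun p =>
    if h : ∃ v : p.1.1.1, (v : p.1.1.1 ⧸ Z p.1.1.1) = p.1.2 ∧ (τ v).toAdd = n then
      Submodule.Quotient.mk ((T (p.2 : ℕ) : ℤ[T;T⁻¹]) • α h.choose) else 0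
  have hΨ : Function.Surjective Ψ := by
    intro a
    obtain ⟨a, rfl⟩ := N.mkQ_surjective a
    obtain ⟨x, hx, hxn⟩ := h2 a (Multiplicative.ofAdd (n : ℤ))
    obtain ⟨V, hV, y, hy⟩ := hcov x
    set v : V := ⟨_, hy⟩ with hv
    have hτv : (τ v).toAdd = n := by simp [hv, hxn]
    have hn' : (n : ℤ) ≠ 0 := by omega
    have hmodpos := Int.emod_nonneg (-(τ y).toAdd) hn'
    have hmodlt := Int.emod_lt_of_pos (-(τ y).toAdd) (show (0 : ℤ) < n by omega)
    refine ⟨⟨⟨⟨V, hV⟩, v⟩, ⟨((-(τ y).toAdd) % n).toNat, by omega⟩⟩, ?_⟩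
    have hex : ∃ w : V, (w : V ⧸ Z V) = v ∧ (τ w).toAdd = n := ⟨v, rfl, hτv⟩
    have hch : hex.choose = v := hinj V hV _ _ n hn' hex.choose_spec.2 hτv hex.choose_spec.1
    simp only [Ψ]
    rw [dif_pos hex, hch]
    simp only [Int.toNat_of_nonneg hmodpos]
    rw [← hmod, Submodule.mkQ_apply]
    -- comparing the two expressions for `α (y * x) = α (v * y)`
    have e1 : α (y * x) = α ((v : H) * y) := by simp [hv]
    rw [h1', h1', hx, hτv] at e1
    have e2 : α v = (T (τ y).toAdd : ℤ[T;T⁻¹]) • a - ((t : ℤ[T;T⁻¹]) ^ n - 1) • α y := by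
      rw [htn, sub_smul, one_smul, eq_sub_iff_add_eq, add_sub, ← e1]
      abel
    rw [e2, Submodule.Quotient.eq, smul_sub, smul_smul, ← T_add, neg_add_cancel, T_zero, one_smul,
      sub_sub_cancel_left]
    exact N.neg_mem (N.smul_mem _
      (Submodule.smul_mem_smul (Ideal.mem_span_singleton_self _) trivial))
  refine ⟨Finite.of_surjective _ hΨ, ?_⟩
  refine (Nat.card_le_card_of_surjective _ hΨ).trans ?_
  rw [Nat.card_prod, Nat.card_fin]

/-- A lift `t` of a generator of `ℤ` splits the extension, so `finite_of_cocycle` shows that the kernel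
of `τ` is finite; hence `⟨t⟩` has finite index. -/
lemma vc_of_abelian_by_int {H : Type*} [Group H] (hfg : Group.FG H) (hb : bVCyc H)
    (τ : H →* Multiplicative ℤ) (hτ : Function.Surjective τ)
    (hcomm : ∀ a ∈ τ.ker, ∀ b ∈ τ.ker, a * b = b * a) : VirtuallyCyclic H := by
  obtain ⟨t, ht⟩ := hτ (Multiplicative.ofAdd 1)
  have htz : ∀ n : Multiplicative ℤ, τ (t ^ n.toAdd) = n := by
    intro n
    rw [map_zpow, ht, ← ofAdd_zsmul]
    simp
  let _ : CommGroup τ.ker :=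
    { (inferInstance : Group τ.ker) with mul_comm := fun a b => Subtype.ext (hcomm _ a.2 _ b.2) }
  let Θ : Multiplicative ℤ →* Module.End ℤ (Additive τ.ker) :=
    { toFun := fun n => (MonoidHom.toAdditive
        (MulAut.conjNormal (H := τ.ker) (t ^ n.toAdd)).toMonoidHom).toIntLinearMap
      map_one' := by ext a; simp
      map_mul' := fun m n => by
        ext a
        apply Additive.toMul.injective
        simp [zpow_add] }
  let α : H → Additive τ.ker := fun x => Additive.ofMul ⟨x * t ^ (-(τ x).toAdd), by
    rw [MonoidHom.mem_ker, map_mul, ← toAdd_inv, htz, mul_inv_cancel]⟩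
  have hA : Finite (Additive τ.ker) := by
    refine finite_of_cocycle Θ τ α ?_ ?_ hfg hb
    · intro x y
      apply Additive.toMul.injective
      apply Subtype.ext
      simp [α, Θ, zpow_add, mul_assoc, -map_zpow]
    · intro a n
      have ha : τ a.toMul = 1 := a.toMul.2
      refine ⟨a.toMul * t ^ n.toAdd, ?_, ?_⟩
      · apply Additive.toMul.injective
        apply Subtype.ext
        simp [α, ha, htz]
      · rw [map_mul, ha, htz, one_mul]
  have hA' : Finite τ.ker := hA
  refine ⟨Subgroup.zpowers t, inferInstance, ?_⟩
  have : Finite (H ⧸ Subgroup.zpowers t) := by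
    refine Finite.of_surjective (fun a : τ.ker => ((a : H) : H ⧸ Subgroup.zpowers t)) ?_
    intro q
    obtain ⟨x, rfl⟩ := QuotientGroup.mk_surjective q
    refine ⟨(α x).toMul, ?_⟩
    rw [QuotientGroup.eq]
    exact Subgroup.mem_zpowers_iff.2 ⟨(τ x).toAdd, by simp [α]⟩
  exact Subgroup.finiteIndex_of_finite_quotient

lemma vc_of_abelian_by_cyclic {H Q : Type*} [Group H] [Group Q] [IsCyclic Q] (hfg : Group.FG H)
    (hb : bVCyc H) (f : H →* Q) (hf : Function.Surjective f)
    (hcomm : ∀ a ∈ f.ker, ∀ b ∈ f.ker, a * b = b * a) : VirtuallyCyclic H := by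
  rcases finite_or_infinite Q with hQ | hQ
  · have : f.ker.FiniteIndex := inferInstance
    refine vc_of_finiteIndex f.ker ?_
    let _ : CommGroup f.ker :=
      { (inferInstance : Group f.ker) with mul_comm := fun a b => Subtype.ext (hcomm _ a.2 _ b.2) }
    exact vc_of_bVCyc_comm (bVCyc_of_finiteIndex f.ker hb)
  · let e : Multiplicative ℤ ≃* Q := intCyclicMulEquiv
    have hker : (e.symm.toMonoidHom.comp f).ker = f.ker := by
      ext x; simp [MonoidHom.mem_ker]
    refine vc_of_abelian_by_int hfg hb (e.symm.toMonoidHom.comp f)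
      (e.symm.surjective.comp hf) ?_
    rw [hker]
    exact hcomm

/-- A finitely generated solvable group with bVCyc is virtually cyclic, by induction on the derived
length: modulo the last nontrivial derived subgroup `A` the group is virtually cyclic, so a finite
index subgroup is an extension of a cyclic group by the abelian group `A`. -/
lemma vc_of_derivedSeries (n : ℕ) : ∀ {G : Type*} [Group G], Group.FG G → bVCyc G →
    derivedSeries G n = ⊥ → VirtuallyCyclic G := by
  induction n with
  | zero =>
    intro G _ _ _ h
    rw [derivedSeries_zero] at h
    exact ⟨⊤, by rw [h]; infer_instance, inferInstance⟩
  | succ n ih =>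
    intro G _ hfg hb h
    have hnorm := derivedSeries_normal G n
    set A := derivedSeries G n with hA
    have hcomm : ∀ a ∈ A, ∀ b ∈ A, a * b = b * a := by
      rw [derivedSeries_succ, Subgroup.commutator_eq_bot_iff_le_centralizer] at h
      intro a ha b hb
      exact (Subgroup.mem_centralizer_iff.1 (h ha) b hb).symm
    have hq : derivedSeries (G ⧸ A) n = ⊥ := by
      rw [← map_derivedSeries_eq (QuotientGroup.mk'_surjective A) n, ← hA,
        (Subgroup.map_eq_bot_iff _), QuotientGroup.ker_mk']
    obtain ⟨Q, hQc, hQf⟩ := ih (QuotientGroup.fg A)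
      (bVCyc_of_surjective _ (QuotientGroup.mk'_surjective A) hb) hq
    let H := Q.comap (QuotientGroup.mk' A)
    have hHf : H.FiniteIndex := ⟨by
      rw [Subgroup.index_comap_of_surjective _ (QuotientGroup.mk'_surjective A)]
      exact Subgroup.FiniteIndex.index_ne_zero⟩
    refine vc_of_finiteIndex H ?_
    have : Group.FG G := hfg
    have hHfg : Group.FG H := Subgroup.fg_of_index_ne_zero H
    refine vc_of_abelian_by_cyclic hHfg (bVCyc_of_finiteIndex H hb)
      ((QuotientGroup.mk' A).subgroupComap Q) ?_ ?_
    · rintro ⟨y, hy⟩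
      obtain ⟨x, rfl⟩ := QuotientGroup.mk'_surjective A y
      exact ⟨⟨x, hy⟩, rfl⟩
    · have hk : ∀ a ∈ ((QuotientGroup.mk' A).subgroupComap Q).ker, (a : G) ∈ A := by
        intro a ha
        rw [MonoidHom.mem_ker] at ha
        have := congrArg Subtype.val ha
        exact (QuotientGroup.eq_one_iff _).1 this
      intro a ha b hb
      exact Subtype.ext (hcomm _ (hk a ha) _ (hk b hb))

end Solvable

/-! ### Spectra of matrices over normed fields -/

section Matrices

variable {L : Type*} [NormedField L] {ι : Type*} [Fintype ι]

lemma norm_mul_entry_le {A B : Matrix ι ι L} {a b : ℝ} (hA : ∀ i j, ‖A i j‖ ≤ a)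
    (hB : ∀ i j, ‖B i j‖ ≤ b) (i j : ι) : ‖(A * B) i j‖ ≤ Fintype.card ι * (a * b) := by
  rw [Matrix.mul_apply]
  have ha : 0 ≤ a := (norm_nonneg _).trans (hA i i)
  calc ‖∑ k, A i k * B k j‖ ≤ ∑ k, ‖A i k * B k j‖ := norm_sum_le _ _
    _ ≤ ∑ _k : ι, a * b := Finset.sum_le_sum (fun k _ => by
        rw [norm_mul]; exact mul_le_mul (hA _ _) (hB _ _) (norm_nonneg _) ha)
    _ = _ := by simp

lemma norm_le_of_mem_spectrum [DecidableEq ι] {A : Matrix ι ι L} {a : ℝ} (hA : ∀ i j, ‖A i j‖ ≤ a) {μ : L}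
    (hμ : μ ∈ spectrum L A) : ‖μ‖ ≤ Fintype.card ι * a := by
  rw [← Matrix.spectrum_toLin', ← Module.End.hasEigenvalue_iff_mem_spectrum] at hμ
  obtain ⟨v, hv⟩ := hμ.exists_hasEigenvector
  have hv1 : A.mulVec v = μ • v := by simpa using hv.apply_eq_smul
  have hv0 := hv.2
  obtain ⟨k, hk⟩ := Function.ne_iff.1 hv0
  have : Nonempty ι := ⟨k⟩
  obtain ⟨i, hi⟩ := Finite.exists_max (fun i => ‖v i‖)
  have hpos : 0 < ‖v i‖ := (norm_pos_iff.2 hk).trans_le (hi k)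
  have h1 := congrFun hv1 i
  rw [Pi.smul_apply, smul_eq_mul, Matrix.mulVec, dotProduct] at h1
  have h2 : ‖μ‖ * ‖v i‖ ≤ (Fintype.card ι * a) * ‖v i‖ := by
    rw [← norm_mul, ← h1]
    calc ‖∑ k, A i k * v k‖ ≤ ∑ k, ‖A i k * v k‖ := norm_sum_le _ _
      _ ≤ ∑ _k : ι, a * ‖v i‖ := Finset.sum_le_sum (fun k _ => by
        rw [norm_mul]
        exact mul_le_mul (hA _ _) (hi k) (norm_nonneg _) ((norm_nonneg _).trans (hA i i)))
      _ = _ := by simp [mul_assoc]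
  exact le_of_mul_le_mul_right h2 hpos

/-- The trace is the sum of the eigenvalues, so it is dominated by one of them. -/
lemma exists_mem_spectrum_trace_le [DecidableEq ι] [IsAlgClosed L] [Nonempty ι] (A : Matrix ι ι L) :
    ∃ μ ∈ spectrum L A, ‖A.trace‖ ≤ Fintype.card ι * ‖μ‖ := by
  by_contra hcon
  push Not at hcon
  have hmem : ∀ μ ∈ A.charpoly.roots, μ ∈ spectrum L A := fun μ hμ => by
    rw [Matrix.mem_spectrum_iff_isRoot_charpoly]
    exact (Polynomial.mem_roots'.1 hμ).2
  have hcard : A.charpoly.roots.card = Fintype.card ι := by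
    rw [IsAlgClosed.card_roots_eq_natDegree, Matrix.charpoly_natDegree_eq_dim]
  have hD : (0 : ℝ) < Fintype.card ι := by exact_mod_cast Fintype.card_pos
  have key : ∀ s : Multiset L, s ≠ 0 → (∀ μ ∈ s, μ ∈ spectrum L A) →
      Fintype.card ι * ‖s.sum‖ < s.card * ‖A.trace‖ := by
    intro s
    induction s using Multiset.induction_on with
    | empty => intro h; exact absurd rfl h
    | cons μ s ih =>
      intro _ h
      have h1 := hcon μ (h μ (Multiset.mem_cons_self _ _))
      rw [Multiset.sum_cons, Multiset.card_cons]
      have h3 := mul_le_mul_of_nonneg_left (norm_add_le μ s.sum) hD.le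
      push_cast
      by_cases hs : s = 0
      · subst hs
        simpa using h1
      · have h2 := ih hs (fun ν hν => h ν (Multiset.mem_cons_of_mem hν))
        nlinarith
  have h0 : A.charpoly.roots ≠ 0 := by
    intro h
    rw [h, Multiset.card_zero] at hcard
    exact Fintype.card_ne_zero hcard.symm
  have := key _ h0 hmem
  rw [← Matrix.trace_eq_sum_roots_charpoly, hcard] at this
  exact lt_irrefl _ this

lemma exists_dominant_eigenvalue [DecidableEq ι] [IsAlgClosed L] [Nonempty ι] (A : Matrix ι ι L) :
    ∃ μ ∈ spectrum L A, ∀ ν ∈ spectrum L A, ‖ν‖ ≤ ‖μ‖ := by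
  obtain ⟨μ, hμ, -⟩ := exists_mem_spectrum_trace_le A
  have hfin : (spectrum L A).Finite := Matrix.finite_spectrum A
  obtain ⟨μ, hμ, h⟩ := Set.exists_max_image _ (fun μ => ‖μ‖) hfin ⟨μ, hμ⟩
  exact ⟨μ, hμ, h⟩

lemma eventually_eq_of_finite_range {X : Type*} [TopologicalSpace X] [T1Space X] {u : ℕ → X} {l : X}
    (h : Filter.Tendsto u Filter.atTop (nhds l)) (hf : (Set.range u).Finite) :
    ∀ᶠ a in Filter.atTop, u a = l := by
  have h1 : (Set.range u \ {l})ᶜ ∈ nhds l :=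
    (hf.subset Set.sdiff_subset).isClosed.isOpen_compl.mem_nhds (by simp)
  filter_upwards [h h1] with a ha
  by_contra hne
  exact ha ⟨⟨a, rfl⟩, hne⟩

lemma map_symm_le_of_map_le {K W : Type*} [Field K] [AddCommGroup W] [Module K W]
    [FiniteDimensional K W] (e : W ≃ₗ[K] W) (S : Submodule K W)
    (h : ∀ z ∈ S, e z ∈ S) : ∀ z ∈ S, e.symm z ∈ S := by
  have h1 : S.map (e : W →ₗ[K] W) = S := by
    refine Submodule.eq_of_le_of_finrank_eq ?_ (LinearEquiv.finrank_map_eq e S)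
    rintro _ ⟨z, hz, rfl⟩
    exact h z hz
  intro z hz
  rw [← h1] at hz
  obtain ⟨y, hy, rfl⟩ := hz
  simpa using hy

end Matrices

/-! ### Proximal elements -/

section Proximal

open Filter Topology Matrix

variable {L : Type*} [NormedField L] {ι : Type*} [Fintype ι] [DecidableEq ι]

/-- The eigenvalues of `A` all have modulus at most `c₂ Λ` and one has modulus at least `c₁ Λ`.
If `A ^ N` and `B ^ n` have the same spectrum, this squeezes `‖μ‖ ^ n`, where `μ` is an eigenvalue
of `B` of maximal modulus; by `exists_exponent_gap` the exponent `n` is then determined up to a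
bounded error. -/
lemma dominant_pow_bounds [IsAlgClosed L] {A B : Matrix ι ι L} {N n : ℕ} (hN : 0 < N) {c₁ c₂ Λ : ℝ}
    (hΛ : 1 < c₁ * Λ) {μ : L} (hμ : μ ∈ spectrum L B)
    (hμ' : ∀ ν ∈ spectrum L B, ‖ν‖ ≤ ‖μ‖) (hAB : spectrum L (A ^ N) = spectrum L (B ^ n))
    (h1 : ∃ ν ∈ spectrum L A, c₁ * Λ ≤ ‖ν‖) (h2 : ∀ ν ∈ spectrum L A, ‖ν‖ ≤ c₂ * Λ) :
    (c₁ * Λ) ^ N ≤ ‖μ‖ ^ n ∧ ‖μ‖ ^ n ≤ (c₂ * Λ) ^ N := by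
  have : Nonempty ι := by
    by_contra h
    rw [not_nonempty_iff] at h
    have : Subsingleton (Matrix ι ι L) := inferInstance
    rw [spectrum.of_subsingleton] at hμ
    exact hμ
  obtain ⟨ν, hν, hν2⟩ := h1
  have hνN : ν ^ N ∈ spectrum L (A ^ N) := spectrum.pow_mem_pow A N hν
  rw [hAB] at hνN
  have hn : 0 < n := by
    rcases Nat.eq_zero_or_pos n with rfl | h
    · exfalso
      rw [pow_zero, spectrum.one_eq] at hνN
      have h3 : ‖ν‖ ^ N = 1 := by rw [← norm_pow, hνN, norm_one]
      have := one_lt_pow₀ (hΛ.trans_le hν2) hN.ne'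
      linarith
    · exact h
  constructor
  · rw [spectrum.map_pow_of_pos B hn] at hνN
    obtain ⟨κ, hκ, hκν⟩ := hνN
    have hκν : κ ^ n = ν ^ N := hκν
    calc (c₁ * Λ) ^ N ≤ ‖ν‖ ^ N := by
          have : 0 ≤ c₁ * Λ := by linarith
          gcongr
      _ = ‖κ‖ ^ n := by rw [← norm_pow, ← norm_pow, hκν]
      _ ≤ ‖μ‖ ^ n := by gcongr; exact hμ' κ hκ
  · have hμn : μ ^ n ∈ spectrum L (B ^ n) := spectrum.pow_mem_pow B n hμ
    rw [← hAB, spectrum.map_pow_of_pos A hN] at hμn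
    obtain ⟨κ, hκ, hκμ⟩ := hμn
    have hκμ : κ ^ N = μ ^ n := hκμ
    rw [← norm_pow, ← hκμ, norm_pow]
    gcongr
    exact h2 κ hκ

/-- The exponents `n` for which `r ^ n` lies between `C₁ Λ` and `C₂ Λ` differ by less than a constant
which does not depend on `Λ`. -/
lemma exists_exponent_gap {C₁ C₂ : ℝ} (hC₁ : 0 < C₁) {r : ℝ} :
    ∃ b : ℕ, ∀ (Λ : ℝ) (n m : ℕ), 1 < C₁ * Λ → C₁ * Λ ≤ r ^ n → r ^ m ≤ C₂ * Λ → 0 ≤ r →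
      m < n + b := by
  rcases le_or_gt r 1 with hr | hr
  · refine ⟨0, fun Λ n m h1 h2 _ h0 => ?_⟩
    have := pow_le_one₀ (n := n) h0 hr
    linarith
  · obtain ⟨b, hb⟩ := pow_unbounded_of_one_lt (C₂ / C₁) hr
    refine ⟨b, fun Λ n m h1 h2 h3 h0 => ?_⟩
    by_contra hcon
    push Not at hcon
    have hΛ : 0 < Λ := by
      by_contra hneg
      nlinarith
    have h4 : r ^ (n + b) ≤ r ^ m := pow_le_pow_right₀ hr.le hcon
    rw [pow_add] at h4
    rw [div_lt_iff₀ hC₁] at hb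
    have h5 : 0 < r ^ b := by positivity
    nlinarith [mul_le_mul_of_nonneg_right h2 h5.le, mul_lt_mul_of_pos_right hb hΛ]

lemma trace_vecMulVec_pow (v w : ι → L) (N : ℕ) (hN : 0 < N) :
    ((vecMulVec v w) ^ N).trace = (w ⬝ᵥ v) ^ N := by
  obtain ⟨n, rfl⟩ := Nat.exists_eq_add_of_lt hN
  rw [zero_add]
  have : (vecMulVec v w) ^ (n + 1) = (w ⬝ᵥ v) ^ n • vecMulVec v w := by
    induction n with
    | zero => simp
    | succ n ih =>
      rw [pow_succ, ih (by omega), smul_mul_assoc, vecMulVec_mul_vecMulVec, pow_succ, mul_smul]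
      congr 1
      ext i j
      simp [vecMulVec_apply]
      ring
  rw [this, trace_smul, trace_vecMulVec, pow_succ, smul_eq_mul, dotProduct_comm v w]

/-- The core of the argument: the matrix coefficient `χ x = l (x v)` attached to a proximal element
`g` is multiplicative on the elements where it does not vanish.

For fixed `s`, all the words `g ^ a x g ^ (s - a) y` have spectral radius comparable to `|lam| ^ s`.
Their `N`-th powers are conjugate to powers of elements of the finite set `C`, and the size leaves
only boundedly many possible exponents, so the normalised traces of these `N`-th powers take
boundedly many values. For `s → ∞` they converge to `u a ^ N`, where
`u a = l (y (g / lam) ^ a x v)`; hence `u` takes finitely many values. As `u a` converges to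
`χ y χ x`, it is eventually equal to it, and since `g` is invertible this linear recurrence holds
at `a = 0` too, where `u 0 = χ (y x)`. -/
lemma proximal_mul [IsAlgClosed L] {G : Type*} [Group G] (C : Finset G) (N : ℕ) (hN : 0 < N)
    (hC : ∀ g : G, ∃ c ∈ C, ∃ k : ℕ, ∃ y : G, g ^ N = y * c ^ k * y⁻¹)
    (ρ : G →* Matrix ι ι L) (g : G) (v l : ι → L) (lam : L) (hlam : 1 < ‖lam‖)
    (hlv : l ⬝ᵥ v = 1) (h1 : ρ g *ᵥ v = lam • v)
    (hconv : Tendsto (fun a : ℕ => (lam⁻¹ • ρ g) ^ a) atTop (𝓝 (vecMulVec v l)))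
    (x y : G) (hx : l ⬝ᵥ (ρ x *ᵥ v) ≠ 0) (hy : l ⬝ᵥ (ρ y *ᵥ v) ≠ 0) :
    l ⬝ᵥ (ρ (y * x) *ᵥ v) = (l ⬝ᵥ (ρ y *ᵥ v)) * (l ⬝ᵥ (ρ x *ᵥ v)) := by
  classical
  have hlam0 : lam ≠ 0 := by
    rintro rfl
    simp at hlam
    linarith
  have hne : Nonempty ι := by
    by_contra h
    rw [not_nonempty_iff] at h
    simp [dotProduct] at hlv
  set T : Matrix ι ι L := lam⁻¹ • ρ g with hT
  set X := ρ x with hX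
  set Y := ρ y with hY
  set P := vecMulVec v l with hP
  have hD : (0 : ℝ) < Fintype.card ι := by exact_mod_cast Fintype.card_pos
  set D : ℝ := (Fintype.card ι : ℝ) with hDdef
  -- the normalised words `g ^ a x g ^ b y`
  let H : ℕ → ℕ → Matrix ι ι L := fun a b => T ^ a * X * T ^ b * Y
  have hw : ∀ a b, ρ (g ^ a * x * g ^ b * y) = lam ^ (a + b) • H a b := by
    intro a b
    have : ρ g = lam • T := by rw [hT, smul_smul, mul_inv_cancel₀ hlam0, one_smul]
    simp only [map_mul, map_pow, this, H, smul_pow, Matrix.smul_mul, Matrix.mul_smul, smul_smul]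
    rw [pow_add, mul_comm]
  obtain ⟨K, hK⟩ : ∃ K : ℝ, ∀ a b i j, ‖H a b i j‖ ≤ K := by
    have hbd : ∃ KT : ℝ, ∀ a i j, ‖(T ^ a) i j‖ ≤ KT := by
      have : ∀ i j, ∃ k : ℝ, ∀ a, ‖(T ^ a) i j‖ ≤ k := by
        intro i j
        have h3 : Tendsto (fun a => (T ^ a) i j) atTop (𝓝 (P i j)) :=
          tendsto_pi_nhds.1 (tendsto_pi_nhds.1 hconv i) j
        obtain ⟨k, hk⟩ := (Metric.isBounded_range_of_tendsto _ h3).exists_norm_le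
        exact ⟨k, fun a => hk _ ⟨a, rfl⟩⟩
      choose k hk using this
      refine ⟨∑ i, ∑ j, |k i j|, fun a i j => (hk i j a).trans ((le_abs_self _).trans ?_)⟩
      refine (Finset.single_le_sum (f := fun j => |k i j|) (fun j _ => abs_nonneg _)
        (Finset.mem_univ j)).trans ?_
      exact Finset.single_le_sum (f := fun i => ∑ j, |k i j|)
        (fun i _ => Finset.sum_nonneg (fun j _ => abs_nonneg _)) (Finset.mem_univ i)
    obtain ⟨KT, hKT⟩ := hbd
    have hfix : ∀ A : Matrix ι ι L, ∃ k : ℝ, ∀ i j, ‖A i j‖ ≤ k := by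
      intro A
      refine ⟨∑ i, ∑ j, ‖A i j‖, fun i j => ?_⟩
      refine (Finset.single_le_sum (f := fun j => ‖A i j‖) (fun j _ => norm_nonneg _)
        (Finset.mem_univ j)).trans ?_
      exact Finset.single_le_sum (f := fun i => ∑ j, ‖A i j‖)
        (fun i _ => Finset.sum_nonneg (fun j _ => norm_nonneg _)) (Finset.mem_univ i)
    obtain ⟨KX, hKX⟩ := hfix X
    obtain ⟨KY, hKY⟩ := hfix Y
    exact ⟨_, fun a b => norm_mul_entry_le (norm_mul_entry_le (norm_mul_entry_le (hKT a) hKX)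
      (hKT b)) hKY⟩
  let χ : G → L := fun z => l ⬝ᵥ (ρ z *ᵥ v)
  let u : ℕ → L := fun a => l ⬝ᵥ ((Y * T ^ a * X) *ᵥ v)
  have hPP : ∀ A B : Matrix ι ι L, (A * P * B).trace = l ⬝ᵥ ((B * A) *ᵥ v) := by
    intro A B
    rw [Matrix.trace_mul_comm, ← Matrix.mul_assoc, hP, Matrix.mul_vecMulVec, trace_vecMulVec,
      dotProduct_comm]
  have hYPX : l ⬝ᵥ ((Y * P * X) *ᵥ v) = χ y * χ x := by
    change _ = (l ⬝ᵥ (Y *ᵥ v)) * (l ⬝ᵥ (X *ᵥ v))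
    rw [hP, Matrix.mul_vecMulVec, Matrix.vecMulVec_mul, vecMulVec_mulVec, dotProduct_mulVec l X v,
      dotProduct_smul]
    simp
  have hulim : Tendsto u atTop (𝓝 (χ y * χ x)) := by
    have hcont : Continuous (fun A : Matrix ι ι L => l ⬝ᵥ ((Y * A * X) *ᵥ v)) := by fun_prop
    rw [← hYPX]
    exact (hcont.tendsto P).comp hconv
  -- a common starting index from which the trace of `H a b` stays away from zero
  obtain ⟨a0, ha0⟩ : ∃ a0 : ℕ, ∀ a b, a0 ≤ a → a0 ≤ b → ‖χ y * χ x‖ / 2 ≤ ‖(H a b).trace‖ := by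
    have hcont : Continuous (fun p : Matrix ι ι L × Matrix ι ι L =>
        (p.1 * X * p.2 * Y).trace) := by fun_prop
    have h3 : Tendsto (fun p : ℕ × ℕ => ‖(H p.1 p.2).trace‖) atTop (𝓝 ‖χ y * χ x‖) := by
      have h4 : Tendsto (fun p : ℕ × ℕ => (T ^ p.1, T ^ p.2)) atTop (𝓝 (P, P)) := by
        rw [← prod_atTop_atTop_eq, nhds_prod_eq]
        exact hconv.prodMap hconv
      rw [← hYPX, Matrix.mul_assoc Y P X, ← hPP (P * X) Y]
      exact ((hcont.tendsto (P, P)).comp h4).norm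
    have hpos : ‖χ y * χ x‖ / 2 < ‖χ y * χ x‖ :=
      half_lt_self (norm_pos_iff.2 (mul_ne_zero hy hx))
    obtain ⟨⟨a1, a2⟩, h6⟩ := eventually_atTop.1 (h3.eventually (eventually_ge_nhds hpos))
    exact ⟨max a1 a2, fun a b ha hb => h6 (a, b)
      ⟨le_trans (le_max_left _ _) ha, le_trans (le_max_right _ _) hb⟩⟩
  set c₁ : ℝ := ‖χ y * χ x‖ / 2 / D with hc₁
  have hc₁pos : 0 < c₁ := by
    have := norm_pos_iff.2 (mul_ne_zero hy hx)
    positivity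
  choose μ hμ hμ' using fun c : G => exists_dominant_eigenvalue (ρ c)
  choose b hb using fun c : G => exists_exponent_gap (C₁ := c₁ ^ N) (C₂ := (D * K) ^ N)
    (pow_pos hc₁pos N) (r := ‖μ c‖)
  -- finiteness of the set of limits of the normalised traces: distinct limits would be separated
  -- at some common large `s`, where only `|C| * b` different values are available
  have hfinN : (Set.range (fun a => u (a + a0) ^ N)).Finite := by
    by_contra hinf
    set b' := C.sup b with hb'
    obtain ⟨S, hS, hScard⟩ := Set.Infinite.exists_subset_card_eq hinf (C.card * b' + 1)
    have hS' : ∀ p ∈ S, ∃ a, u (a + a0) ^ N = p := fun p hp => hS hp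
    choose! φ hφ using hS'
    have hlim : ∀ a, Tendsto (fun s : ℕ => ((H a (s - a)) ^ N).trace) atTop (𝓝 (u a ^ N)) := by
      intro a
      have hcont : Continuous (fun A : Matrix ι ι L => ((T ^ a * X * A * Y) ^ N).trace) := by
        fun_prop
      have h3 := ((hcont.tendsto P).comp hconv).comp (tendsto_sub_atTop_nat a)
      refine Eq.mp (congrArg (fun z => Tendsto _ atTop (𝓝 z)) ?_) h3
      rw [hP, Matrix.mul_vecMulVec, Matrix.vecMulVec_mul, trace_vecMulVec_pow _ _ _ hN,
        ← dotProduct_mulVec, mulVec_mulVec, ← Matrix.mul_assoc]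
    have hev : ∀ᶠ s : ℕ in atTop, ∀ p ∈ S, ∀ q ∈ S, p ≠ q →
        ((H (φ p + a0) (s - (φ p + a0))) ^ N).trace ≠
          ((H (φ q + a0) (s - (φ q + a0))) ^ N).trace := by
      rw [Finset.eventually_all]
      intro p hp
      rw [Finset.eventually_all]
      intro q hq
      by_cases hpq : p = q
      · exact Eventually.of_forall (fun _ h => absurd hpq h)
      · by_contra hnev
        rw [Filter.not_eventually] at hnev
        have h3 := tendsto_nhds_unique_of_frequently_eq (hlim (φ p + a0)) (hlim (φ q + a0))
          (hnev.mono (fun s hs => by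
            by_contra hne2
            exact hs (fun _ => hne2)))
        rw [show u (φ p + a0) ^ N = p from hφ p hp, show u (φ q + a0) ^ N = q from hφ q hq] at h3
        exact hpq h3
    have hev2 : ∀ᶠ s : ℕ in atTop, 1 < c₁ * ‖lam‖ ^ s := by
      have := (tendsto_pow_atTop_atTop_of_one_lt hlam).const_mul_atTop hc₁pos
      exact this.eventually_gt_atTop 1
    have hev3 : ∀ᶠ s : ℕ in atTop, ∀ p ∈ S, φ p + a0 + a0 ≤ s := by
      rw [Finset.eventually_all]
      exact fun p _ => eventually_ge_atTop _
    obtain ⟨s, hs1, hs2, hs3⟩ := (hev.and (hev2.and hev3)).exists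
    choose cc hcc kk yy hyy using fun p : L =>
      hC (g ^ (φ p + a0) * x * g ^ (s - (φ p + a0)) * y)
    have htr : ∀ p ∈ S, ((H (φ p + a0) (s - (φ p + a0))) ^ N).trace =
        (lam ^ (s * N))⁻¹ * (ρ (cc p) ^ kk p).trace := by
      intro p hp
      have h3 := hs3 p hp
      have h4 := congrArg (fun z => (ρ z).trace) (hyy p)
      simp only [map_mul, map_pow] at h4
      rw [Matrix.trace_mul_cycle, ← map_mul, inv_mul_cancel, map_one, Matrix.one_mul] at h4
      rw [← h4, ← map_pow ρ, ← map_pow ρ, ← map_mul ρ, ← map_mul ρ, ← map_mul ρ, hw,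
        Nat.add_sub_cancel' (by omega), smul_pow, trace_smul, ← pow_mul, smul_eq_mul, ← mul_assoc,
        inv_mul_cancel₀ (pow_ne_zero _ hlam0), one_mul]
    have hbounds : ∀ p ∈ S, (c₁ * ‖lam‖ ^ s) ^ N ≤ ‖μ (cc p)‖ ^ kk p ∧
        ‖μ (cc p)‖ ^ kk p ≤ (D * K * ‖lam‖ ^ s) ^ N := by
      intro p hp
      have h3 := hs3 p hp
      have hwp := hw (φ p + a0) (s - (φ p + a0))
      rw [Nat.add_sub_cancel' (by omega)] at hwp
      refine dominant_pow_bounds (A := ρ (g ^ (φ p + a0) * x * g ^ (s - (φ p + a0)) * y))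
        (B := ρ (cc p)) hN hs2 (hμ _) (hμ' _) ?_ ?_ ?_
      · rw [← map_pow, hyy p, map_mul, map_mul, map_pow]
        exact spectrum.units_conjugate (u := Units.map ρ (toUnits (yy p)))
      · obtain ⟨ν, hν, hν2⟩ := exists_mem_spectrum_trace_le
          (ρ (g ^ (φ p + a0) * x * g ^ (s - (φ p + a0)) * y))
        refine ⟨ν, hν, ?_⟩
        rw [hwp, trace_smul, norm_smul, norm_pow] at hν2
        have h5 := ha0 (φ p + a0) (s - (φ p + a0)) (by omega) (by omega)
        rw [hc₁, div_mul_eq_mul_div, div_le_iff₀ hD, mul_comm ‖ν‖, mul_comm]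
        refine le_trans ?_ hν2
        gcongr
      · intro ν hν
        refine (norm_le_of_mem_spectrum (a := K * ‖lam‖ ^ s) ?_ hν).trans (by
          rw [mul_assoc])
        intro i j
        rw [hwp, Matrix.smul_apply, norm_smul, norm_pow, mul_comm]
        gcongr
        exact hK _ _ _ _
    -- pigeonhole on the base and on the exponent modulo the maximal gap
    have hmaps : ∀ p ∈ S, (cc p, kk p % b') ∈ C ×ˢ Finset.range b' := by
      intro p hp
      rw [Finset.mem_product, Finset.mem_range]
      refine ⟨hcc p, Nat.mod_lt _ ?_⟩
      have h3 := hb (cc p) ((‖lam‖ ^ s) ^ N) (kk p) (kk p)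
        (by rw [← mul_pow]; exact one_lt_pow₀ hs2 hN.ne')
        (by rw [← mul_pow]; exact (hbounds p hp).1)
        (by rw [← mul_pow]; exact (hbounds p hp).2) (norm_nonneg _)
      have h4 : b (cc p) ≤ b' := Finset.le_sup (hcc p)
      omega
    obtain ⟨p, hp, q, hq, hpq, heq⟩ := Finset.exists_ne_map_eq_of_card_lt_of_maps_to
      (by rw [Finset.card_product, Finset.card_range, hScard]; omega) hmaps
    rw [Prod.mk.injEq] at heq
    refine hs1 p hp q hq hpq ?_
    rw [htr p hp, htr q hq]
    have hgap : ∀ p ∈ S, ∀ q ∈ S, cc p = cc q → kk q < kk p + b' := by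
      intro p hp q hq hcpq
      have h3 := hb (cc p) ((‖lam‖ ^ s) ^ N) (kk p) (kk q)
        (by rw [← mul_pow]; exact one_lt_pow₀ hs2 hN.ne')
        (by rw [← mul_pow]; exact (hbounds p hp).1)
        (by rw [← mul_pow, hcpq]; exact (hbounds q hq).2) (norm_nonneg _)
      have h4 : b (cc p) ≤ b' := Finset.le_sup (hcc p)
      omega
    have hk : kk p = kk q := by
      have e1 := hgap p hp q hq heq.1
      have e2 := hgap q hq p hp heq.1.symm
      have e3 := heq.2
      exact Nat.ModEq.eq_of_abs_lt e3 (by rw [abs_lt]; omega)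
    rw [heq.1, hk]
  have hfin : (Set.range (fun a => u (a + a0))).Finite := by
    have hroots : ∀ z : L, ((fun t : L => t ^ N) ⁻¹' {z}).Finite := by
      intro z
      refine (Polynomial.nthRoots N z).toFinset.finite_toSet.subset ?_
      intro t ht
      simpa [Polynomial.mem_nthRoots hN] using ht
    refine (hfinN.preimage' (fun z _ => hroots z)).subset ?_
    rintro _ ⟨a, rfl⟩
    exact ⟨a, rfl⟩
  have hev := eventually_eq_of_finite_range (hulim.comp (tendsto_add_atTop_nat a0)) hfin
  obtain ⟨a1, ha1⟩ := eventually_atTop.1 hev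
  -- `T` is invertible, so the relation for large powers of `T` holds for the zeroth power
  let e : (ι → L) ≃ₗ[L] (ι → L) := LinearEquiv.ofLinearMap (T.mulVecLin)
    ((lam • ρ g⁻¹).mulVecLin)
    (by
      rw [← Matrix.mulVecLin_mul, hT, smul_mul_smul_comm, ← map_mul, inv_mul_cancel₀ hlam0]
      simp)
    (by
      rw [← Matrix.mulVecLin_mul, hT, smul_mul_smul_comm, ← map_mul, mul_inv_cancel₀ hlam0]
      simp)
  have he : ∀ z, e z = T *ᵥ z := fun z => rfl
  have hTv : T *ᵥ v = v := by
    rw [hT, smul_mulVec, h1, smul_smul, inv_mul_cancel₀ hlam0, one_smul]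
  have hTav : ∀ a : ℕ, (T ^ a) *ᵥ v = v := by
    intro a
    induction a with
    | zero => simp
    | succ a ih => rw [pow_succ, ← mulVec_mulVec, hTv, ih]
  let S : Submodule L (ι → L) :=
    { carrier := {z | ∀ a, a1 + a0 ≤ a → l ⬝ᵥ ((Y * T ^ a) *ᵥ z) = 0}
      add_mem' := fun {z z'} hz hz' a ha => by
        rw [mulVec_add, dotProduct_add, hz a ha, hz' a ha, add_zero]
      zero_mem' := fun a _ => by simp
      smul_mem' := fun c z hz a ha => by
        rw [mulVec_smul, dotProduct_smul, hz a ha, smul_zero] }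
  have hSe : ∀ z ∈ S, e z ∈ S := by
    intro z hz a ha
    rw [he, mulVec_mulVec, Matrix.mul_assoc, ← pow_succ]
    exact hz (a + 1) (by omega)
  have hSsymm := map_symm_le_of_map_le e S hSe
  have hz0 : X *ᵥ v - χ x • v ∈ S := by
    intro a ha
    have h3 := ha1 (a - a0) (by omega)
    simp only [Function.comp_apply, u, Nat.sub_add_cancel (show a0 ≤ a by omega)] at h3
    rw [mulVec_sub, dotProduct_sub, mulVec_mulVec, h3, mulVec_smul, ← mulVec_mulVec, hTav,
      dotProduct_smul, smul_eq_mul]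
    ring
  have hiter : ∀ n : ℕ, ∃ z ∈ S, (T ^ n) *ᵥ z = X *ᵥ v - χ x • v := by
    intro n
    induction n with
    | zero => exact ⟨_, hz0, by simp⟩
    | succ n ih =>
      obtain ⟨z, hz, hz2⟩ := ih
      refine ⟨e.symm z, hSsymm z hz, ?_⟩
      rw [pow_succ, ← mulVec_mulVec, ← he, e.apply_symm_apply, hz2]
  obtain ⟨z, hz, hz2⟩ := hiter (a1 + a0)
  have h3 := hz (a1 + a0) le_rfl
  rw [← mulVec_mulVec, hz2, mulVec_sub, dotProduct_sub, mulVec_smul, dotProduct_smul,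
    mulVec_mulVec, sub_eq_zero, hX, hY, ← map_mul] at h3
  rw [h3, smul_eq_mul, mul_comm]

end Proximal

section Proximal

open Matrix Filter Topology

variable {L ι : Type*} [NormedField L] [Fintype ι] [DecidableEq ι]

/-- The elements at which the coefficient `χ x = l (x v)` of a proximal element `g` does not vanish
form a subgroup of index at most the dimension. On it `χ` is a character with `χ g = lam ≠ 1`, so
`g` is not a product of commutators of elements of that subgroup. -/
lemma proximal_subgroup [IsAlgClosed L] {G : Type*} [Group G] (C : Finset G) (N : ℕ) (hN : 0 < N)
    (hC : ∀ g : G, ∃ c ∈ C, ∃ k : ℕ, ∃ y : G, g ^ N = y * c ^ k * y⁻¹)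
    (ρ : G →* Matrix ι ι L) (g : G) (v l : ι → L) (lam : L) (hlam : 1 < ‖lam‖)
    (hlv : l ⬝ᵥ v = 1) (h1 : ρ g *ᵥ v = lam • v)
    (hconv : Tendsto (fun a : ℕ => (lam⁻¹ • ρ g) ^ a) atTop (𝓝 (vecMulVec v l))) :
    ∃ M : Subgroup G, M.index ≠ 0 ∧ M.index ≤ Fintype.card ι ∧
      ∀ G0 : Subgroup G, G0 ≤ M → g ∉ ⁅G0, G0⁆ := by
  classical
  set χ : G → L := fun z => l ⬝ᵥ (ρ z *ᵥ v) with hχ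
  have hmul : ∀ y x, χ y ≠ 0 → χ x ≠ 0 → χ (y * x) = χ y * χ x := fun y x hy hx =>
    proximal_mul C N hN hC ρ g v l lam hlam hlv h1 hconv x y hx hy
  have hone : χ 1 = 1 := by simp [χ, hlv]
  have hρinv : ∀ x, ρ x * ρ x⁻¹ = 1 := fun x => by rw [← map_mul, mul_inv_cancel, map_one]
  have hρinv' : ∀ x, ρ x⁻¹ * ρ x = 1 := fun x => by rw [← map_mul, inv_mul_cancel, map_one]
  let e : G → ((ι → L) ≃ₗ[L] (ι → L)) := fun x => LinearEquiv.ofLinearMap (ρ x).mulVecLin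
    (ρ x⁻¹).mulVecLin
    (by rw [← Matrix.mulVecLin_mul, hρinv, Matrix.mulVecLin_one])
    (by rw [← Matrix.mulVecLin_mul, hρinv', Matrix.mulVecLin_one])
  have he : ∀ x z, e x z = ρ x *ᵥ z := fun _ _ => rfl
  have he' : ∀ x z, (e x).symm z = ρ x⁻¹ *ᵥ z := fun _ _ => rfl
  let E : Submodule L (ι → L) := Submodule.span L {z | ∃ y, χ y ≠ 0 ∧ z = ρ y *ᵥ v}
  have hE : ∀ x, χ x ≠ 0 → ∀ z ∈ E, e x z ∈ E ∧ l ⬝ᵥ (ρ x *ᵥ z) = χ x * (l ⬝ᵥ z) := by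
    intro x hx z hz
    induction hz using Submodule.span_induction with
    | mem z hz =>
      obtain ⟨y, hy, rfl⟩ := hz
      have h2 := hmul x y hx hy
      refine ⟨Submodule.subset_span ⟨x * y, ?_, ?_⟩, ?_⟩
      · rw [h2]; exact mul_ne_zero hx hy
      · rw [he, mulVec_mulVec, map_mul]
      · rw [mulVec_mulVec, ← map_mul]; exact h2
    | zero => simp
    | add z z' _ _ h h' =>
      refine ⟨by rw [map_add]; exact E.add_mem h.1 h'.1, ?_⟩
      rw [mulVec_add, dotProduct_add, h.2, h'.2, dotProduct_add, mul_add]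
    | smul a z _ h =>
      refine ⟨by rw [map_smul]; exact E.smul_mem _ h.1, ?_⟩
      rw [mulVec_smul, dotProduct_smul, h.2, dotProduct_smul, smul_eq_mul, smul_eq_mul]
      ring
  have hvE : v ∈ E := Submodule.subset_span ⟨1, by rw [hone]; exact one_ne_zero, by simp⟩
  have hinv : ∀ x, χ x ≠ 0 → χ x⁻¹ ≠ 0 := by
    intro x hx h0
    have h2 := map_symm_le_of_map_le (e x) E (fun z hz => (hE x hx z hz).1) v hvE
    have h3 := (hE x hx _ h2).2
    rw [he', mulVec_mulVec, hρinv, one_mulVec, hlv] at h3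
    change 1 = χ x * χ x⁻¹ at h3
    rw [h0, mul_zero] at h3
    exact one_ne_zero h3
  let M : Subgroup G :=
    { carrier := {x | χ x ≠ 0}
      mul_mem' := fun {a b} ha hb => by
        change χ (a * b) ≠ 0
        rw [hmul a b ha hb]
        exact mul_ne_zero ha hb
      one_mem' := by
        change χ 1 ≠ 0
        rw [hone]; exact one_ne_zero
      inv_mem' := fun {a} ha => hinv a ha }
  have hM : ∀ x, x ∈ M ↔ χ x ≠ 0 := fun _ => Iff.rfl
  have hcard : Finite (G ⧸ M) ∧ Nat.card (G ⧸ M) ≤ Fintype.card ι := by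
    obtain ⟨B, hB1, hB2, hB3⟩ := exists_linearIndependent L (Set.range (fun f : G => l ᵥ* ρ f))
    have hBfin : B.Finite := hB3.setFinite
    have := hBfin.fintype
    have hBc : Fintype.card B ≤ Fintype.card ι := by
      have := hB3.fintype_card_le_finrank
      simpa using this
    choose f hf using fun b : B => hB1 b.2
    have hsurj : Function.Surjective (fun b : B => (((f b)⁻¹ : G) : G ⧸ M)) := by
      intro q
      obtain ⟨z, rfl⟩ := QuotientGroup.mk_surjective q
      -- otherwise `z v` would be killed by every functional `l ∘ ρ f`, in particular by `l ∘ ρ z⁻¹`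
      by_contra hcon
      push Not at hcon
      have h0 : ∀ b : B, (b : ι → L) ⬝ᵥ (ρ z *ᵥ v) = 0 := by
        intro b
        by_contra hb
        refine hcon b (QuotientGroup.eq.2 ?_)
        rw [hM, inv_inv]
        intro h
        apply hb
        rw [← hf b, ← dotProduct_mulVec, mulVec_mulVec, ← map_mul]
        exact h
      have h2 : ∀ w ∈ Submodule.span L B, w ⬝ᵥ (ρ z *ᵥ v) = 0 := by
        intro w hw
        induction hw using Submodule.span_induction with
        | mem w hw => exact h0 ⟨w, hw⟩
        | zero => simp
        | add a b _ _ ha hb => rw [add_dotProduct, ha, hb, add_zero]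
        | smul c a _ ha => rw [smul_dotProduct, ha, smul_zero]
      have h3 := h2 (l ᵥ* ρ z⁻¹) (by rw [hB2]; exact Submodule.subset_span ⟨z⁻¹, rfl⟩)
      rw [← dotProduct_mulVec, mulVec_mulVec, hρinv', one_mulVec, hlv] at h3
      exact one_ne_zero h3
    refine ⟨Finite.of_surjective _ hsurj, (Nat.card_le_card_of_surjective _ hsurj).trans ?_⟩
    rw [Nat.card_eq_fintype_card]
    exact hBc
  refine ⟨M, ?_, hcard.2, ?_⟩
  · have := hcard.1
    exact (Subgroup.finiteIndex_of_finite_quotient (H := M)).index_ne_zero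
  · intro G0 hG0 hg
    let χM : M →* L :=
      { toFun := fun x => χ x
        map_one' := hone
        map_mul' := fun a b => hmul _ _ a.2 b.2 }
    let K0 : Subgroup G := (χM.toHomUnits.ker).map M.subtype
    have hle : ⁅G0, G0⁆ ≤ K0 := by
      rw [Subgroup.commutator_le]
      intro a ha b hb
      refine ⟨(⟨a, hG0 ha⟩ : M) * ⟨b, hG0 hb⟩ * (⟨a, hG0 ha⟩ : M)⁻¹ * (⟨b, hG0 hb⟩ : M)⁻¹, ?_, rfl⟩
      change χM.toHomUnits _ = 1
      rw [map_mul, map_mul, map_mul, map_inv, map_inv, mul_comm (χM.toHomUnits _), mul_inv_cancel_right,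
        mul_inv_cancel]
    obtain ⟨m, hm, hmg⟩ := hle hg
    have h2 : χM.toHomUnits m = 1 := hm
    have h3 : χ m = 1 := congrArg Units.val h2
    have h4 : (m : G) = g := hmg
    rw [h4] at h3
    simp only [χ, h1, dotProduct_smul, hlv, smul_eq_mul, mul_one] at h3
    rw [h3, norm_one] at hlam
    exact lt_irrefl _ hlam

end Proximal

section ProximalEnd

open Matrix Filter Topology

variable {L : Type*} [NormedField L]

/-- Coordinate-free form of `proximal_subgroup`; the convergence of the normalised powers of `g`
needs to be tested only on a separating family of functionals. -/
lemma proximal_end [IsAlgClosed L] {G : Type*} [Group G] (C : Finset G) (N : ℕ) (hN : 0 < N)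
    (hC : ∀ g : G, ∃ c ∈ C, ∃ k : ℕ, ∃ y : G, g ^ N = y * c ^ k * y⁻¹)
    {W : Type*} [AddCommGroup W] [Module L W] [FiniteDimensional L W]
    (ρ : G →* Module.End L W) (g : G) (v : W) (l : Module.Dual L W) (lam : L) (hlam : 1 < ‖lam‖)
    (hlv : l v = 1) (J : Set (Module.Dual L W)) (hJ : ∀ w, (∀ j ∈ J, j w = 0) → w = 0)
    (hconv : ∀ j ∈ J, ∀ w, Tendsto (fun a : ℕ => j (((lam⁻¹ • ρ g) ^ a) w)) atTop
      (𝓝 (l w * j v))) :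
    ∃ M : Subgroup G, M.index ≠ 0 ∧ M.index ≤ Module.finrank L W ∧
      ∀ G0 : Subgroup G, G0 ≤ M → g ∉ ⁅G0, G0⁆ := by
  have hlam0 : lam ≠ 0 := by
    rintro rfl
    simp at hlam
    linarith
  have hspan : Submodule.span L J = ⊤ := by
    have h1 : (Submodule.span L J).dualCoannihilator = ⊥ := by
      rw [eq_bot_iff]
      intro w hw
      rw [Submodule.mem_dualCoannihilator] at hw
      exact hJ w (fun j hj => hw j (Submodule.subset_span hj))
    rw [← Subspace.dualCoannihilator_dualAnnihilator_eq (W := Submodule.span L J), h1,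
      Submodule.dualAnnihilator_bot]
  have hall : ∀ j : Module.Dual L W, ∀ w, Tendsto (fun a : ℕ => j (((lam⁻¹ • ρ g) ^ a) w)) atTop
      (𝓝 (l w * j v)) := by
    intro j w
    have hj : j ∈ Submodule.span L J := by rw [hspan]; trivial
    induction hj using Submodule.span_induction with
    | mem j hj => exact hconv j hj w
    | zero => simp
    | add i j _ _ hi hj =>
      simp only [LinearMap.add_apply, mul_add]
      exact hi.add hj
    | smul c j _ hj =>
      simp only [LinearMap.smul_apply, smul_eq_mul, mul_left_comm (l w) c]
      exact hj.const_mul c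
  let b := Module.finBasis L W
  let Φ := LinearMap.toMatrixAlgEquiv b
  let ρ' : G →* Matrix (Fin (Module.finrank L W)) (Fin (Module.finrank L W)) L :=
    (Φ : Module.End L W →* _).comp ρ
  let v' : Fin (Module.finrank L W) → L := fun i => b.repr v i
  let l' : Fin (Module.finrank L W) → L := fun i => l (b i)
  have hlv' : l' ⬝ᵥ v' = 1 := by
    rw [← hlv]
    conv_rhs => rw [← b.sum_repr v, map_sum]
    simp [dotProduct, l', v', mul_comm]
  have hconv' : Tendsto (fun a : ℕ => (lam⁻¹ • ρ' g) ^ a) atTop (𝓝 (vecMulVec v' l')) := by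
    have h1 : ∀ a : ℕ, (lam⁻¹ • ρ' g) ^ a = Φ ((lam⁻¹ • ρ g) ^ a) := by
      intro a
      rw [map_pow, map_smul]
      rfl
    simp only [h1]
    refine tendsto_pi_nhds.2 (fun i => tendsto_pi_nhds.2 (fun j => ?_))
    simp only [Φ, LinearMap.toMatrixAlgEquiv_apply]
    rw [vecMulVec_apply, mul_comm]
    exact hall (b.coord i) (b j)
  have hfix : (lam⁻¹ • ρ' g) * vecMulVec v' l' = vecMulVec v' l' := by
    have hcont : Continuous (fun A => (lam⁻¹ • ρ' g) * A) := by fun_prop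
    have h1 := (hcont.tendsto _).comp hconv'
    have h2 := hconv'.comp (tendsto_add_atTop_nat 1)
    refine tendsto_nhds_unique (h1.congr (fun a => ?_)) h2
    simp [pow_succ']
  have h1 : ρ' g *ᵥ v' = lam • v' := by
    have h2 := congrArg (fun A => lam • (A *ᵥ v')) hfix
    simp only [← mulVec_mulVec, vecMulVec_mulVec, hlv'] at h2
    simpa [smul_mulVec, smul_smul, hlam0] using h2
  obtain ⟨M, hM1, hM2, hM3⟩ := proximal_subgroup C N hN hC ρ' g v' l' lam hlam hlv' h1 hconv'
  exact ⟨M, hM1, by simpa using hM2, hM3⟩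

end ProximalEnd

/-! ### Dominant alternating forms -/

section Growth

open Filter Topology

variable {L : Type*} [NormedField L] {d : ℕ}

/-- On a generalised eigenspace, powers grow like `‖μ‖ ^ a` times a polynomial in `a`. -/
lemma growth_of_mem_maxGenEigenspace (g : Module.End L (Fin d → L)) (μ : L) (R : ℝ)
    (hR : ‖μ‖ < R) (x : Fin d → L) (hx : x ∈ g.maxGenEigenspace μ) :
    ∃ c : ℝ, 0 ≤ c ∧ ∀ a : ℕ, ‖(g ^ a) x‖ ≤ c * R ^ a := by
  have hR0 : 0 < R := (norm_nonneg μ).trans_lt hR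
  rw [Module.End.mem_maxGenEigenspace] at hx
  obtain ⟨n, hn⟩ := hx
  induction n generalizing x with
  | zero =>
    have : x = 0 := by simpa using hn
    exact ⟨0, le_rfl, fun a => by simp [this]⟩
  | succ n ih =>
    obtain ⟨c, hc, h⟩ := ih ((g - μ • 1) x) (by rwa [pow_succ] at hn)
    refine ⟨max ‖x‖ (c / (R - ‖μ‖)), le_max_of_le_left (norm_nonneg _), fun a => ?_⟩
    induction a with
    | zero => simp
    | succ a iha =>
      have h1 : (g ^ (a + 1)) x = μ • (g ^ a) x + (g ^ a) ((g - μ • 1) x) := by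
        rw [pow_succ]
        simp
      set B := max ‖x‖ (c / (R - ‖μ‖)) with hB
      have h2 : c ≤ B * (R - ‖μ‖) := by
        rw [← div_le_iff₀ (sub_pos.2 hR)]
        exact le_max_right _ _
      rw [h1]
      refine (norm_add_le _ _).trans ?_
      rw [norm_smul]
      have h3 := h a
      have h4 : ‖μ‖ * ‖(g ^ a) x‖ ≤ ‖μ‖ * (B * R ^ a) := by gcongr
      have h5 : c * R ^ a ≤ B * (R - ‖μ‖) * R ^ a := by gcongr
      calc _ ≤ ‖μ‖ * (B * R ^ a) + B * (R - ‖μ‖) * R ^ a := by linarith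
        _ = B * R ^ (a + 1) := by ring

lemma growth_of_mem_iSup (g : Module.End L (Fin d → L)) (s : Set L) (R : ℝ)
    (hR : ∀ μ ∈ s, ‖μ‖ < R) (x : Fin d → L)
    (hx : x ∈ ⨆ μ ∈ s, g.maxGenEigenspace μ) :
    ∃ c : ℝ, 0 ≤ c ∧ ∀ a : ℕ, ‖(g ^ a) x‖ ≤ c * R ^ a := by
  let S : Submodule L (Fin d → L) :=
    { carrier := {x | ∃ c : ℝ, 0 ≤ c ∧ ∀ a : ℕ, ‖(g ^ a) x‖ ≤ c * R ^ a}
      add_mem' := by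
        rintro x y ⟨c, hc, hx⟩ ⟨c', hc', hy⟩
        refine ⟨c + c', by positivity, fun a => ?_⟩
        rw [map_add, add_mul]
        exact (norm_add_le _ _).trans (add_le_add (hx a) (hy a))
      zero_mem' := ⟨0, le_rfl, fun a => by simp⟩
      smul_mem' := by
        rintro t x ⟨c, hc, hx⟩
        refine ⟨‖t‖ * c, by positivity, fun a => ?_⟩
        rw [map_smul, norm_smul, mul_assoc]
        gcongr
        exact hx a }
  have : ⨆ μ ∈ s, g.maxGenEigenspace μ ≤ S :=
    iSup₂_le (fun μ hμ y hy => growth_of_mem_maxGenEigenspace g μ R (hR μ hμ) y hy)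
  exact this hx

lemma multilinear_bound {k : ℕ} (f : MultilinearMap L (fun _ : Fin k => Fin d → L) L) :
    ∃ c : ℝ, 0 ≤ c ∧ ∀ x, ‖f x‖ ≤ c * ∏ i, ‖x i‖ := by
  classical
  refine ⟨∑ r : Fin k → Fin d, ‖f (fun i => Pi.single (r i) 1)‖,
    Finset.sum_nonneg (fun _ _ => norm_nonneg _), fun x => ?_⟩
  have h1 : f x = ∑ r : Fin k → Fin d, (∏ i, x i (r i)) • f (fun i => Pi.single (r i) 1) := by
    have hx : x = fun i => ∑ j, x i j • (Pi.single j 1 : Fin d → L) := by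
      funext i
      exact pi_eq_sum_univ' (x i) |>.trans (by simp)
    conv_lhs => rw [hx, MultilinearMap.map_sum]
    exact Finset.sum_congr rfl (fun r _ =>
      f.map_smul_univ (fun i => x i (r i)) (fun i => Pi.single (r i) 1))
  rw [h1, Finset.sum_mul]
  refine (norm_sum_le _ _).trans (Finset.sum_le_sum (fun r _ => ?_))
  rw [norm_smul, mul_comm, norm_prod]
  gcongr with i _
  exact norm_le_pi_norm (x i) (r i)

end Growth

section DominantForm

open Filter Topology

variable {L : Type*} [NormedField L] {d : ℕ}

/-- If `g` has an eigenvalue of modulus greater than `1`, then it acts proximally on the space of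
alternating forms of degree `k`, where `k` is the number of eigenvalues of maximal modulus, counted
with multiplicity. Here `lam` is the determinant of `g` on the sum `Vp` of the generalised
eigenspaces of maximal modulus, `e` is a basis of `Vp`, and `v` is the determinant form of `Vp`
precomposed with the projection along the other generalised eigenspaces. -/
lemma exists_dominant_form [IsAlgClosed L] (g : Module.End L (Fin d → L)) (μ0 : L)
    (hμ0 : g.HasEigenvalue μ0) (h1 : 1 < ‖μ0‖) :
    ∃ k ≤ d, ∃ lam : L, 1 < ‖lam‖ ∧ ∃ v : (Fin d → L) [⋀^Fin k]→ₗ[L] L, ∃ e : Fin k → Fin d → L,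
      v e = 1 ∧ ∀ (f : (Fin d → L) [⋀^Fin k]→ₗ[L] L) (w : Fin k → Fin d → L),
        Tendsto (fun a : ℕ => (lam⁻¹) ^ a * f (fun i => (g ^ a) (w i))) atTop
          (𝓝 (f e * v w)) := by
  classical
  have hfin : {μ | g.HasEigenvalue μ}.Finite := Module.End.finite_hasEigenvalue g
  obtain ⟨μ1, hμ1, hmax⟩ := Set.exists_max_image _ (fun μ : L => ‖μ‖) hfin ⟨μ0, hμ0⟩
  obtain ⟨r, hr⟩ : ∃ r, r = ‖μ1‖ := ⟨_, rfl⟩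
  have hr1 : 1 < r := by rw [hr]; exact h1.trans_le (hmax μ0 hμ0)
  let sp : Set L := {μ | ‖μ‖ = r}
  let sm : Set L := {μ | g.HasEigenvalue μ ∧ ‖μ‖ ≠ r}
  have hsm : ∀ μ ∈ sm, ‖μ‖ < r := fun μ hμ => lt_of_le_of_ne (hr ▸ hmax μ hμ.1) hμ.2
  let Vp : Submodule L (Fin d → L) := ⨆ μ ∈ sp, g.maxGenEigenspace μ
  let Vm : Submodule L (Fin d → L) := ⨆ μ ∈ sm, g.maxGenEigenspace μ
  have hind := Module.End.independent_maxGenEigenspace g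
  have hcompl : IsCompl Vp Vm := by
    constructor
    · refine hind.disjoint_biSup_biSup ?_
      rw [Set.disjoint_left]
      exact fun μ h h' => h'.2 h
    · rw [codisjoint_iff, eq_top_iff, ← Module.End.iSup_maxGenEigenspace_eq_top g]
      refine iSup_le (fun μ => ?_)
      by_cases h : ‖μ‖ = r
      · exact (le_iSup₂_of_le (f := fun μ (_ : μ ∈ sp) => g.maxGenEigenspace μ) μ h
          le_rfl).trans le_sup_left
      · by_cases h' : g.HasEigenvalue μ
        · exact (le_iSup₂_of_le (f := fun μ (_ : μ ∈ sm) => g.maxGenEigenspace μ) μ ⟨h', h⟩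
            le_rfl).trans le_sup_right
        · have : g.maxGenEigenspace μ = ⊥ := by
            by_contra hne
            exact h' ((Module.End.hasUnifEigenvalue_iff_hasUnifEigenvalue_one (by simp)).1 hne)
          rw [this]
          exact bot_le
  have hinv : ∀ x ∈ Vp, g x ∈ Vp := by
    have : Vp ≤ Vp.comap g := by
      refine iSup₂_le (fun μ hμ => ?_)
      intro x hx
      have h2 := Module.End.mapsTo_maxGenEigenspace_of_comm (Commute.refl g) μ hx
      exact (le_iSup₂_of_le (f := fun μ (_ : μ ∈ sp) => g.maxGenEigenspace μ) μ hμ le_rfl) h2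
    exact this
  let gp : Module.End L Vp := g.restrict hinv
  have hgp : ∀ (a : ℕ) (x : Vp), ((gp ^ a) x : Fin d → L) = (g ^ a) x := by
    intro a
    induction a with
    | zero => simp
    | succ a ih =>
      intro x
      rw [pow_succ, pow_succ, Module.End.mul_apply, ih]
      rfl
  obtain ⟨k, hk⟩ : ∃ k, k = Module.finrank L Vp := ⟨_, rfl⟩
  let e : Module.Basis (Fin k) L Vp := Module.finBasisOfFinrankEq L Vp hk.symm
  have hkpos : 0 < k := by
    obtain ⟨x, hx⟩ := Module.End.HasEigenvalue.exists_hasEigenvector hμ1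
    have hxV : x ∈ Vp := by
      refine (le_iSup₂_of_le (f := fun μ (_ : μ ∈ sp) => g.maxGenEigenspace μ) μ1 hr.symm le_rfl) ?_
      rw [Module.End.mem_maxGenEigenspace]
      refine ⟨1, ?_⟩
      simp [hx.apply_eq_smul]
    rw [hk]
    exact Module.finrank_pos_iff_exists_ne_zero.2 ⟨⟨x, hxV⟩, fun h => hx.2 (congrArg Subtype.val h)⟩
  have hlam : ‖LinearMap.det gp‖ = r ^ k := by
    rw [← LinearMap.det_toMatrix e, Matrix.det_eq_prod_roots_charpoly, LinearMap.charpoly_toMatrix]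
    have hroot : ∀ μ ∈ gp.charpoly.roots, ‖μ‖ = r := by
      intro μ hμ
      have h2 := (Module.End.hasEigenvalue_iff_isRoot_charpoly gp μ).2 (Polynomial.isRoot_of_mem_roots hμ)
      obtain ⟨x, hx⟩ := Module.End.HasEigenvalue.exists_hasEigenvector h2
      by_contra hne
      have hd : Disjoint (g.maxGenEigenspace μ) Vp := hind.disjoint_biSup (y := sp) hne
      have hxm : (x : Fin d → L) ∈ g.maxGenEigenspace μ := by
        rw [Module.End.mem_maxGenEigenspace]
        refine ⟨1, ?_⟩
        have h3 : g x = μ • (x : Fin d → L) := congrArg Subtype.val hx.apply_eq_smul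
        simp [h3]
      exact hx.2 (Subtype.ext (Submodule.disjoint_def.1 hd _ hxm x.2))
    have hcard : gp.charpoly.roots.card = k := by
      rw [IsAlgClosed.card_roots_eq_natDegree, LinearMap.charpoly_natDegree, hk]
    have h3 : ‖gp.charpoly.roots.prod‖ = (gp.charpoly.roots.map (fun x => ‖x‖)).prod :=
      map_multiset_prod (normHom (α := L)) _
    rw [h3, Multiset.map_congr rfl hroot, Multiset.map_const', Multiset.prod_replicate, hcard]
  have hkd : k ≤ d := by
    rw [hk]
    simpa using Submodule.finrank_le Vp
  have hlam1 : 1 < ‖LinearMap.det gp‖ := by rw [hlam]; exact one_lt_pow₀ hr1 hkpos.ne'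
  have hlam0 : LinearMap.det gp ≠ 0 := by
    intro h
    rw [h, norm_zero] at hlam1
    linarith
  let π := Vp.projectionOnto Vm hcompl
  refine ⟨k, hkd, LinearMap.det gp, hlam1, e.det.compLinearMap π, fun i => e i, ?_, ?_⟩
  · have : (fun i => π (e i)) = e := by
      funext i
      exact Submodule.projectionOnto_apply_left hcompl (e i)
    rw [AlternatingMap.compLinearMap_apply]
    change e.det (fun i => π (e i)) = 1
    rw [this, Module.Basis.det_self]
  intro f w
  -- choice of the rates: `r' < r < R` with `R ^ (k - 1) * r' < r ^ k`
  obtain ⟨r', hr'0, hr'1, hr'2⟩ : ∃ r' : ℝ, 0 < r' ∧ r' < r ∧ ∀ μ ∈ sm, ‖μ‖ < r' := by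
    have hsmf : sm.Finite := hfin.subset (fun μ hμ => hμ.1)
    have h2 : ∀ᶠ t in 𝓝[<] r, ∀ μ ∈ sm, ‖μ‖ < t := by
      rw [Filter.eventually_all_finite hsmf]
      intro μ hμ
      exact (eventually_gt_nhds (hsm μ hμ)).filter_mono nhdsWithin_le_nhds
    have h3 : ∀ᶠ t in 𝓝[<] r, 0 < t :=
      (eventually_gt_nhds (by linarith)).filter_mono nhdsWithin_le_nhds
    obtain ⟨t, ⟨ht1, ht2⟩, ht3⟩ := ((h2.and h3).and self_mem_nhdsWithin).exists
    exact ⟨t, ht2, ht3, ht1⟩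
  obtain ⟨R, hR1, hR2⟩ : ∃ R : ℝ, r < R ∧ R ^ (k - 1) * r' < r ^ k := by
    have h2 : r ^ (k - 1) * r' < r ^ k := by
      rw [← Nat.sub_add_cancel hkpos, pow_succ, Nat.add_sub_cancel]
      gcongr
    have hcont : Continuous (fun t : ℝ => t ^ (k - 1) * r') := by fun_prop
    have h3 : ∀ᶠ t in 𝓝[>] r, t ^ (k - 1) * r' < r ^ k :=
      ((hcont.tendsto r).eventually (eventually_lt_nhds h2)).filter_mono nhdsWithin_le_nhds
    obtain ⟨t, ht1, ht2⟩ := (h3.and self_mem_nhdsWithin).exists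
    exact ⟨t, ht2, ht1⟩
  let p : Fin k → Fin d → L := fun i => (π (w i) : Fin d → L)
  let q : Fin k → Fin d → L := fun i => w i - (π (w i) : Fin d → L)
  have hq : ∀ i, q i ∈ Vm := by
    intro i
    rw [← Submodule.projectionOnto_apply_eq_zero_iff hcompl]
    simp only [q, map_sub]
    rw [sub_eq_zero]
    exact (Submodule.projectionOnto_apply_left hcompl _).symm
  have hp : ∀ i, p i ∈ Vp := fun i => (π (w i)).2
  choose cp hcp0 hcp using fun i => growth_of_mem_iSup g sp R
    (fun μ hμ => lt_of_eq_of_lt hμ hR1) (p i) (hp i)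
  choose cq hcq0 hcq using fun i => growth_of_mem_iSup g sm r' hr'2 (q i) (hq i)
  have hexp : ∀ a : ℕ, (LinearMap.det gp)⁻¹ ^ a * f (fun i => (g ^ a) (w i)) =
      ∑ s : Finset (Fin k), (LinearMap.det gp)⁻¹ ^ a *
        f (s.piecewise (fun i => (g ^ a) (p i)) (fun i => (g ^ a) (q i))) := by
    intro a
    rw [← Finset.mul_sum]
    congr 1
    have h2 : (fun i => (g ^ a) (w i)) = (fun i => (g ^ a) (p i)) + (fun i => (g ^ a) (q i)) := by
      funext i
      simp [p, q]
    rw [h2]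
    exact f.toMultilinearMap.map_add_univ _ _
  simp only [hexp]
  have hlimit : f (fun i => e i) * (e.det.compLinearMap π) w =
      ∑ s : Finset (Fin k), if s = Finset.univ then
        f (fun i => e i) * (e.det.compLinearMap π) w else 0 := by simp
  rw [hlimit]
  refine tendsto_finsetSum _ (fun s _ => ?_)
  by_cases hs : s = Finset.univ
  · rw [if_pos hs, hs]
    refine tendsto_const_nhds.congr (fun a => ?_)
    have h2 := AlternatingMap.eq_smul_basis_det e (f.compLinearMap Vp.subtype)
    have h3 := congrArg (fun F => F (fun i => (gp ^ a) (π (w i)))) h2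
    have h4 : e.det (fun i => (gp ^ a) (π (w i))) =
        LinearMap.det gp ^ a * e.det (fun i => π (w i)) := by
      rw [← map_pow, ← Module.Basis.det_comp]
      rfl
    simp only [AlternatingMap.smul_apply, h4] at h3
    rw [Finset.piecewise_univ]
    have h5 : f (fun i => (g ^ a) (p i)) =
        (f.compLinearMap Vp.subtype) (fun i => (gp ^ a) (π (w i))) := by
      rw [AlternatingMap.compLinearMap_apply]
      congr 1
      funext i
      exact (hgp a _).symm
    rw [h5, h3, inv_pow, smul_eq_mul, mul_left_comm, inv_mul_cancel_left₀ (pow_ne_zero _ hlam0)]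
    rfl
  · rw [if_neg hs]
    obtain ⟨i0, hi0⟩ : ∃ i0, i0 ∉ s := by
      by_contra hcon
      push Not at hcon
      exact hs (Finset.eq_univ_iff_forall.2 hcon)
    obtain ⟨c, hc0, hc⟩ := multilinear_bound f.toMultilinearMap
    set θ : ℝ := R ^ (k - 1) * r' / r ^ k with hθ
    have hr0 : 0 < r := by linarith
    have hRpos : 0 < R := by linarith
    have hθ0 : 0 ≤ θ := by positivity
    have hθ1 : θ < 1 := by rw [hθ, div_lt_one (by positivity)]; exact hR2
    have hlim0 : Tendsto (fun a : ℕ => (c * ∏ i, (cp i + cq i)) * θ ^ a) atTop (𝓝 0) := by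
      simpa using (tendsto_pow_atTop_nhds_zero_of_lt_one hθ0 hθ1).const_mul
        (c * ∏ i, (cp i + cq i))
    refine squeeze_zero_norm (fun a => ?_) hlim0
    rw [norm_mul, norm_pow, norm_inv, hlam]
    let t : Fin k → ℝ := fun i => if i ∈ s then R else r'
    have ht0 : ∀ i, 0 ≤ t i := by
      intro i
      simp only [t]
      split_ifs <;> positivity
    have ht : ∏ i, t i ≤ R ^ (k - 1) * r' := by
      rw [← Finset.prod_erase_mul _ _ (Finset.mem_univ i0)]
      have h2 : t i0 = r' := by simp [t, hi0]
      rw [h2]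
      gcongr
      refine (Finset.prod_le_prod (g := fun _ => R) (fun i _ => ht0 i) (fun i _ => ?_)).trans_eq ?_
      · simp only [t]
        split_ifs <;> linarith
      · rw [Finset.prod_const, Finset.card_erase_of_mem (Finset.mem_univ _), Finset.card_univ, Fintype.card_fin]
    have hb : ∀ i, ‖s.piecewise (fun i => (g ^ a) (p i)) (fun i => (g ^ a) (q i)) i‖ ≤
        (cp i + cq i) * t i ^ a := by
      intro i
      by_cases hi : i ∈ s
      · rw [Finset.piecewise_eq_of_mem _ _ _ hi]
        simp only [t, if_pos hi]
        refine (hcp i a).trans ?_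
        gcongr
        linarith [hcq0 i]
      · rw [Finset.piecewise_eq_of_notMem _ _ _ hi]
        simp only [t, if_neg hi]
        refine (hcq i a).trans ?_
        gcongr
        linarith [hcp0 i]
    have h6 : ‖f (s.piecewise (fun i => (g ^ a) (p i)) (fun i => (g ^ a) (q i)))‖ ≤
        c * ((∏ i, (cp i + cq i)) * (R ^ (k - 1) * r') ^ a) := by
      refine (hc _).trans ?_
      gcongr
      refine (Finset.prod_le_prod (fun i _ => norm_nonneg _) (fun i _ => hb i)).trans ?_
      rw [Finset.prod_mul_distrib, Finset.prod_pow]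
      have : 0 ≤ ∏ i, (cp i + cq i) := Finset.prod_nonneg
        (fun i _ => add_nonneg (hcp0 i) (hcq0 i))
      gcongr
    refine (mul_le_mul_of_nonneg_left h6 (by positivity)).trans_eq ?_
    rw [hθ, div_pow, inv_pow]
    ring

end DominantForm

section DominantForm

open Filter Topology

variable {L : Type*} [NormedField L] {d : ℕ}

/-- The (left) action of `G` on alternating forms induced by a linear action of `G`. -/
def formRep {G : Type*} [Group G] (σ : G →* Module.End L (Fin d → L)) (k : ℕ) :
    G →* Module.End L ((Fin d → L) [⋀^Fin k]→ₗ[L] L) where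
  toFun x :=
    { toFun := fun f => f.compLinearMap (σ x⁻¹)
      map_add' := fun _ _ => rfl
      map_smul' := fun _ _ => rfl }
  map_one' := by
    ext f w
    simp
  map_mul' x y := by
    ext f w
    simp only [mul_inv_rev, map_mul]
    rfl

/-- An alternating form is determined by its values on basis vectors, whence the dimension bound
`d ^ k`. -/
lemma alternating_finite (d k : ℕ) :
    FiniteDimensional L ((Fin d → L) [⋀^Fin k]→ₗ[L] L) ∧
      Module.finrank L ((Fin d → L) [⋀^Fin k]→ₗ[L] L) ≤ d ^ k := by
  let j : ((Fin d → L) [⋀^Fin k]→ₗ[L] L) →ₗ[L] ((Fin k → Fin d) → L) :=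
    { toFun := fun f t => f (fun i => Pi.basisFun L (Fin d) (t i))
      map_add' := fun _ _ => rfl
      map_smul' := fun _ _ => rfl }
  have hj : Function.Injective j := by
    intro f f' h
    exact Module.Basis.ext_alternating (Pi.basisFun L (Fin d)) (fun t _ => congrFun h t)
  refine ⟨Module.Finite.of_injective j hj, ?_⟩
  have := LinearMap.finrank_le_finrank_of_injective hj
  simpa using this

/-- An eigenvalue of modulus greater than `1` makes `g⁻¹` proximal on alternating `k`-forms, a space of
dimension at most `d ^ d`. This gives a subgroup of index at most `d ^ d`, hence containing `G0`, in
which `g⁻¹` is not a product of commutators. -/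
lemma norm_eigenvalue_le_one [IsAlgClosed L] {G : Type*} [Group G] (C : Finset G) (N : ℕ)
    (hN : 0 < N) (hC : ∀ g : G, ∃ c ∈ C, ∃ k : ℕ, ∃ y : G, g ^ N = y * c ^ k * y⁻¹)
    (σ : G →* Module.End L (Fin d → L)) (G0 : Subgroup G)
    (hG0 : ∀ M : Subgroup G, M.index ≠ 0 → M.index ≤ d ^ d → G0 ≤ M) (g : G) (hg : g ∈ ⁅G0, G0⁆)
    (μ : L) (hμ : (σ g).HasEigenvalue μ) : ‖μ‖ ≤ 1 := by
  by_contra hcon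
  push Not at hcon
  obtain ⟨k, hkd, lam, hlam, v, e, hve, hconv⟩ := exists_dominant_form (σ g) μ hμ hcon
  have hd : 0 < d := by
    rcases Nat.eq_zero_or_pos d with rfl | h
    · obtain ⟨x, hx⟩ := hμ.exists_hasEigenvector
      exact absurd (Subsingleton.elim x 0) hx.2
    · exact h
  have hfd := (alternating_finite (L := L) d k).1
  let ev : (Fin k → Fin d → L) → Module.Dual L ((Fin d → L) [⋀^Fin k]→ₗ[L] L) := fun w =>
    { toFun := fun f => f w
      map_add' := fun _ _ => rfl
      map_smul' := fun _ _ => rfl }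
  have hpow : ∀ (a : ℕ) (f : (Fin d → L) [⋀^Fin k]→ₗ[L] L) (w : Fin k → Fin d → L),
      (((lam⁻¹ • formRep σ k g⁻¹) ^ a) f) w = (lam⁻¹) ^ a * f (fun i => ((σ g) ^ a) (w i)) := by
    intro a f w
    rw [smul_pow, ← map_pow]
    have h : ((g⁻¹) ^ a)⁻¹ = g ^ a := by rw [inv_pow, inv_inv]
    rw [← map_pow σ, ← h]
    rfl
  obtain ⟨M, hM1, hM2, hM3⟩ := proximal_end C N hN hC (formRep σ k) g⁻¹ v (ev e) lam hlam hve
    (Set.range ev) (fun f hf => AlternatingMap.ext (fun w => hf _ ⟨w, rfl⟩))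
    (by
      rintro _ ⟨w, rfl⟩ f
      refine (hconv f w).congr (fun a => ?_)
      exact (hpow a f w).symm)
  refine hM3 G0 (hG0 M hM1 (hM2.trans ?_)) (inv_mem hg)
  exact (alternating_finite (L := L) d k).2.trans (Nat.pow_le_pow_right hd hkd)

end DominantForm

/-! ### Absolute values detecting roots of unity -/

section AbsoluteValues

/-- A nonarchimedean absolute value on a field extends to an algebraically closed field: complete
the field and use the spectral norm on the algebraic closure of the completion. -/
lemma exists_algClosed_extension.{u} {k : Type u} [Field k] (v : AbsoluteValue k ℝ)
    (hv : IsNonarchimedean v) (x : k) (hx : 1 < v x) :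
    ∃ (L : Type u) (_ : NormedField L) (_ : IsAlgClosed L) (τ : k →+* L), 1 < ‖τ x‖ := by
  let E := v.Completion
  have hu : IsUltrametricDist E := by
    refine IsUltrametricDist.isUltrametricDist_of_forall_norm_add_le_max_norm (fun a b => ?_)
    induction a, b using UniformSpace.Completion.induction_on₂ with
    | hp => exact isClosed_le (by fun_prop) (by fun_prop)
    | ih a b =>
      rw [← UniformSpace.Completion.coe_add, UniformSpace.Completion.norm_coe,
        UniformSpace.Completion.norm_coe, UniformSpace.Completion.norm_coe]
      exact hv _ _
  let τ0 : k →+* E := (UniformSpace.Completion.coeRingHom (α := WithAbs v)).comp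
    (WithAbs.equiv v).symm.toRingHom
  have hτ0 : ‖τ0 x‖ = v x := UniformSpace.Completion.norm_coe _
  let i1 : NontriviallyNormedField E :=
    { (inferInstance : NormedField E) with
      non_trivial := ⟨τ0 x, by rw [hτ0]; exact hx⟩ }
  have hu' : @IsUltrametricDist E i1.toDist := hu
  have hc : CompleteSpace E := UniformSpace.Completion.completeSpace _
  refine ⟨AlgebraicClosure E, spectralNorm.normedField E (AlgebraicClosure E), inferInstance,
    (algebraMap E (AlgebraicClosure E)).comp τ0, ?_⟩
  change 1 < spectralNorm E (AlgebraicClosure E) (algebraMap E (AlgebraicClosure E) (τ0 x))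
  rw [spectralNorm_extends]
  exact hx.trans_eq hτ0.symm

lemma exists_algClosed_dedekind.{u} {R : Type*} {k : Type u} [CommRing R] [IsDedekindDomain R] [Field k]
    [Algebra R k] [IsFractionRing R k] (x : k) (hx0 : x ≠ 0)
    (w : IsDedekindDomain.HeightOneSpectrum R) (hx : w.valuation k x ≠ 1) :
    ∃ (L : Type u) (_ : NormedField L) (_ : IsAlgClosed L) (τ : k →+* L), ‖τ x‖ ≠ 1 := by
  have hb : (1 : NNReal) < 2 := by norm_num
  have hval : w.adicAbv (K := k) hb x ≠ 1 := by
    change ((w.adicAbvDef (K := k) hb x : NNReal) : ℝ) ≠ 1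
    rw [ne_eq, NNReal.coe_eq_one, IsDedekindDomain.HeightOneSpectrum.adicAbvDef]
    intro h
    rw [← map_one (WithZeroMulInt.toNNReal (ne_zero_of_lt hb))] at h
    exact hx ((WithZeroMulInt.toNNReal_strictMono hb).injective h)
  have hna := w.isNonarchimedean_adicAbv (K := k) hb
  rcases lt_or_gt_of_ne hval with h | h
  · obtain ⟨L, h1, h2, τ, h3⟩ := exists_algClosed_extension (w.adicAbv (K := k) hb) hna x⁻¹ (by
      rw [map_inv₀]
      exact (one_lt_inv₀ ((w.adicAbv (K := k) hb).pos hx0)).2 h)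
    refine ⟨L, h1, h2, τ, fun h4 => ?_⟩
    rw [map_inv₀, norm_inv, h4, inv_one] at h3
    exact lt_irrefl _ h3
  · obtain ⟨L, h1, h2, τ, h3⟩ := exists_algClosed_extension (w.adicAbv (K := k) hb) hna x h
    exact ⟨L, h1, h2, τ, h3.ne'⟩

end AbsoluteValues

section Places

open Polynomial

/-- The place is the `X`-adic one of `F(X)`, embedded by sending `X` to `x`. -/
lemma exists_place_of_transcendental {F : Type} [Field F] {K : Type*} [Field K] [Algebra F K]
    (x : K) (hx : Transcendental F x) :
    ∃ (k : Type) (_ : Field k) (φ : k →+* K) (y : k), φ y = x ∧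
      ∃ (L : Type) (_ : NormedField L) (_ : IsAlgClosed L) (τ : k →+* L), ‖τ y‖ ≠ 1 := by
  have hinj : Function.Injective (aeval x : F[X] →ₐ[F] K).toRingHom :=
    transcendental_iff_injective.1 hx
  refine ⟨RatFunc F, inferInstance, IsFractionRing.lift hinj, algebraMap F[X] (RatFunc F) X, ?_,
    exists_algClosed_dedekind (R := F[X]) _ ?_ (idealX F) ?_⟩
  · rw [IsFractionRing.lift_algebraMap]
    simp
  · rw [ne_eq, FaithfulSMul.algebraMap_eq_zero_iff]
    exact X_ne_zero
  · refine ne_of_lt ?_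
    rw [IsDedekindDomain.HeightOneSpectrum.valuation_lt_one_iff_mem, idealX_span]
    exact Ideal.mem_span_singleton_self _

/-- A nonzero element of a field which is not a root of unity has absolute value different from `1`
for some embedding of a subfield `k` containing it into an algebraically closed normed field. For an
algebraic integer this is Kronecker's theorem. -/
lemma exists_place {K : Type*} [Field K] (x : K) (hx0 : x ≠ 0) (hx : ∀ n : ℕ, 0 < n → x ^ n ≠ 1) :
    ∃ (k : Type) (_ : Field k) (φ : k →+* K) (y : k), φ y = x ∧
      ∃ (L : Type) (_ : NormedField L) (_ : IsAlgClosed L) (τ : k →+* L), ‖τ y‖ ≠ 1 := by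
  obtain ⟨p, hp⟩ := CharP.exists K
  rcases CharP.char_is_prime_or_zero K p with hpp | rfl
  · have : Fact p.Prime := ⟨hpp⟩
    let _ : Algebra (ZMod p) K := ZMod.algebra K p
    by_cases hal : IsAlgebraic (ZMod p) x
    · exfalso
      let k := IntermediateField.adjoin (ZMod p) {x}
      have hfd : FiniteDimensional (ZMod p) k :=
        IntermediateField.adjoin.finiteDimensional hal.isIntegral
      have hfin : Finite k := Module.finite_of_finite (ZMod p)
      let y : k := ⟨x, IntermediateField.mem_adjoin_simple_self (ZMod p) x⟩
      have hy0 : y ≠ 0 := fun h => hx0 (congrArg Subtype.val h)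
      obtain ⟨n, hn, h⟩ := isOfFinOrder_iff_pow_eq_one.1 (isOfFinOrder_of_finite (Units.mk0 y hy0))
      have h2 : y ^ n = 1 := congrArg Units.val h
      exact hx n hn (congrArg Subtype.val h2)
    · exact exists_place_of_transcendental x hal
  · have : CharZero K := CharP.charP_to_charZero K
    by_cases hal : IsAlgebraic ℚ x
    · have hirr : Fact (Irreducible (minpoly ℚ x)) := ⟨minpoly.irreducible hal.isIntegral⟩
      let k := AdjoinRoot (minpoly ℚ x)
      let φ : k →+* K := AdjoinRoot.lift (algebraMap ℚ K) x (minpoly.aeval ℚ x)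
      let y : k := AdjoinRoot.root (minpoly ℚ x)
      have hφ : φ y = x := AdjoinRoot.lift_root _
      have hy0 : y ≠ 0 := by
        intro h
        rw [h, map_zero] at hφ
        exact hx0 hφ.symm
      have hfd : FiniteDimensional ℚ k :=
        (AdjoinRoot.powerBasis (minpoly.ne_zero hal.isIntegral)).finite
      have hcz : CharZero k := charZero_of_injective_algebraMap (algebraMap ℚ k).injective
      have hnf : NumberField k := ⟨⟩
      refine ⟨k, inferInstance, φ, y, hφ, ?_⟩
      by_cases hintg : IsIntegral ℤ y
      · by_contra hcon
        push Not at hcon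
        obtain ⟨n, hn, h⟩ := NumberField.Embeddings.pow_eq_one_of_norm_eq_one k ℂ hintg
          (fun τ => hcon ℂ inferInstance inferInstance τ)
        refine hx n hn ?_
        rw [← hφ, ← map_pow, h, map_one]
      · have : ∃ w : IsDedekindDomain.HeightOneSpectrum (NumberField.RingOfIntegers k),
            w.valuation k y ≠ 1 := by
          by_contra hcon
          push Not at hcon
          obtain ⟨z, hz⟩ := IsDedekindDomain.HeightOneSpectrum.mem_integers_of_valuation_le_one
            (R := NumberField.RingOfIntegers k) k y (fun w => (hcon w).le)
          apply hintg
          rw [← hz]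
          exact z.2
        obtain ⟨w, hw⟩ := this
        exact exists_algClosed_dedekind (R := NumberField.RingOfIntegers k) y hy0 w hw
    · exact exists_place_of_transcendental x hal

end Places

/-! ### Specialization of linear groups -/

section Specialization

open Matrix

/-- A finitely generated linear group is defined over a finitely generated algebra. -/
lemma exists_fg_subalgebra (k : Type*) {K : Type*} [CommRing k] [Field K] [Algebra k K] {d : ℕ}
    {G : Type*} [Group G] (hfg : Group.FG G) (ρ : G →* GL (Fin d) K) :
    ∃ A : Subalgebra k K, A.FG ∧ ∃ ρ' : G →* Matrix (Fin d) (Fin d) A,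
      ∀ g, (ρ' g).map (algebraMap A K) = ρ g := by
  classical
  obtain ⟨T, hT⟩ := Group.fg_def.1 hfg
  let S : Finset K := (T ×ˢ (Finset.univ ×ˢ Finset.univ)).image
      (fun p : G × Fin d × Fin d => (ρ p.1 : Matrix (Fin d) (Fin d) K) p.2.1 p.2.2) ∪
    (T ×ˢ (Finset.univ ×ˢ Finset.univ)).image
      (fun p : G × Fin d × Fin d => (ρ p.1⁻¹ : Matrix (Fin d) (Fin d) K) p.2.1 p.2.2)
  let A := Algebra.adjoin k (S : Set K)
  have hmul : ∀ X Y : Matrix (Fin d) (Fin d) K, (∀ i j, X i j ∈ A) → (∀ i j, Y i j ∈ A) →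
      ∀ i j, (X * Y) i j ∈ A := by
    intro X Y hX hY i j
    rw [Matrix.mul_apply]
    exact sum_mem (fun l _ => mul_mem (hX i l) (hY l j))
  have hmem : ∀ g, (∀ i j, (ρ g : Matrix (Fin d) (Fin d) K) i j ∈ A) ∧
      (∀ i j, (ρ g⁻¹ : Matrix (Fin d) (Fin d) K) i j ∈ A) := by
    intro g
    have hg : g ∈ Subgroup.closure (T : Set G) := by rw [hT]; trivial
    induction hg using Subgroup.closure_induction with
    | mem x hx =>
      refine ⟨fun i j => Algebra.subset_adjoin ?_, fun i j => Algebra.subset_adjoin ?_⟩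
      · refine Finset.mem_coe.2 (Finset.mem_union_left _ (Finset.mem_image.2 ⟨(x, i, j), ?_, rfl⟩))
        simpa using hx
      · refine Finset.mem_coe.2 (Finset.mem_union_right _ (Finset.mem_image.2 ⟨(x, i, j), ?_, rfl⟩))
        simpa using hx
    | one =>
      have : ∀ i j, (1 : Matrix (Fin d) (Fin d) K) i j ∈ A := by
        intro i j
        rw [Matrix.one_apply]
        split_ifs
        · exact one_mem _
        · exact zero_mem _
      simpa using this
    | mul x y _ _ hx hy =>
      rw [_root_.mul_inv_rev, map_mul, map_mul]
      exact ⟨hmul _ _ hx.1 hy.1, hmul _ _ hy.2 hx.2⟩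
    | inv x _ hx => exact ⟨hx.2, by rw [inv_inv]; exact hx.1⟩
  refine ⟨A, ⟨S, rfl⟩,
    { toFun := fun g => Matrix.of (fun i j => ⟨(ρ g : Matrix (Fin d) (Fin d) K) i j, (hmem g).1 i j⟩)
      map_one' := ?_
      map_mul' := ?_ }, fun g => rfl⟩
  · ext i j
    simp [Matrix.one_apply]
    split_ifs <;> rfl
  · intro x y
    ext i j
    simp [Matrix.mul_apply]

lemma exists_ringHom_of_finite {k F L : Type*} [Field k] [Field F] [Algebra k F] [Module.Finite k F]
    [Field L] [IsAlgClosed L] (τ : k →+* L) : ∃ θ : F →+* L, ∀ y : k, θ (algebraMap k F y) = τ y := by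
  let _ : Algebra k L := τ.toAlgebra
  let ψ : F →ₐ[k] L := IsAlgClosed.lift
  exact ⟨ψ.toRingHom, fun y => AlgHom.commutes ψ y⟩

/-- A ring homomorphism from a field to an algebraically closed field extends to every finitely
generated subalgebra of an extension of that field, by the Nullstellensatz. -/
lemma exists_specialization {k K L : Type*} [Field k] [Field K] [Algebra k K] [Field L]
    [IsAlgClosed L] (τ : k →+* L) (A : Subalgebra k K) (hA : A.FG) :
    ∃ θ : A →+* L, ∀ y : k, θ (algebraMap k A y) = τ y := by
  have hft : Algebra.FiniteType k A := Subalgebra.fg_iff_finiteType A |>.1 hA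
  obtain ⟨m, hm⟩ := Ideal.exists_maximal A
  let _ : Field (A ⧸ m) := Ideal.Quotient.field m
  have hft' : Algebra.FiniteType k (A ⧸ m) :=
    hft.of_surjective (Ideal.Quotient.mkₐ k m) (Ideal.Quotient.mkₐ_surjective k m)
  have hfin : Module.Finite k (A ⧸ m) := finite_of_finite_type_of_isJacobsonRing k (A ⧸ m)
  obtain ⟨ψ, hψ⟩ := exists_ringHom_of_finite (F := A ⧸ m) τ
  exact ⟨ψ.comp (Ideal.Quotient.mk m), fun y => hψ y⟩

lemma hasEigenvalue_toLin'_iff {K : Type*} [Field K] {d : ℕ} (A : Matrix (Fin d) (Fin d) K)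
    (μ : K) : Module.End.HasEigenvalue (Matrix.toLin' A) μ ↔ A.charpoly.IsRoot μ := by
  rw [Module.End.hasEigenvalue_iff_isRoot_charpoly, Matrix.charpoly_toLin']

/-- The eigenvalues of the elements of `⁅G0, G0⁆` are roots of unity: otherwise `exists_place` and
`exists_specialization` transport the group to a normed field in which an eigenvalue `x` has modulus
different from `1`, and `norm_eigenvalue_le_one` fails for `g` or for `g⁻¹`. -/
lemma eigenvalue_root_of_unity {G : Type*} [Group G] (hfg : Group.FG G) (C : Finset G) (N : ℕ)
    (hN : 0 < N) (hC : ∀ g : G, ∃ c ∈ C, ∃ k : ℕ, ∃ y : G, g ^ N = y * c ^ k * y⁻¹)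
    {K : Type*} [Field K] {d : ℕ} (ρ : G →* GL (Fin d) K) (G0 : Subgroup G)
    (hG0 : ∀ M : Subgroup G, M.index ≠ 0 → M.index ≤ d ^ d → G0 ≤ M) (g : G) (hg : g ∈ ⁅G0, G0⁆)
    (x : K) (hx : (ρ g : Matrix (Fin d) (Fin d) K).charpoly.IsRoot x) :
    ∃ n : ℕ, 0 < n ∧ x ^ n = 1 := by
  by_contra hcon
  push Not at hcon
  have hx0 : x ≠ 0 := by
    rintro rfl
    rw [Polynomial.IsRoot, Matrix.eval_charpoly] at hx
    simp only [map_zero, zero_sub, Matrix.det_neg, mul_eq_zero] at hx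
    rcases hx with h | h
    · exact absurd h (pow_ne_zero _ (by simp))
    · exact (Matrix.isUnits_det_units (ρ g)).ne_zero h
  obtain ⟨k, _, φ, y, hφ, L, _, _, τ, hτ⟩ := exists_place x hx0 hcon
  let _ : Algebra k K := φ.toAlgebra
  obtain ⟨A, hA, ρ', hρ'⟩ := exists_fg_subalgebra k hfg ρ
  obtain ⟨θ, hθ⟩ := exists_specialization τ A hA
  let σ : G →* Module.End L (Fin d → L) :=
    ((Matrix.toLinAlgEquiv' (R := L) (n := Fin d)).toAlgHom.toRingHom.toMonoidHom).comp
      ((RingHom.mapMatrix (m := Fin d) θ).toMonoidHom.comp ρ')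
  have hσ : ∀ z, σ z = Matrix.toLin' ((ρ' z).map θ) := fun z => rfl
  have hroot : (σ g).HasEigenvalue (τ y) := by
    rw [hσ, hasEigenvalue_toLin'_iff, Matrix.charpoly_map, Polynomial.IsRoot, ← hθ y,
      Polynomial.eval_map_apply]
    have h2 : (ρ' g).charpoly.eval (algebraMap k A y) = 0 := by
      apply FaithfulSMul.algebraMap_injective A K
      rw [map_zero, ← Polynomial.eval_map_apply, ← Matrix.charpoly_map, hρ',
        ← IsScalarTower.algebraMap_apply]
      change Polynomial.eval (φ y) _ = 0
      rw [hφ]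
      exact hx
    rw [h2, map_zero]
  have h1 := norm_eigenvalue_le_one C N hN hC σ G0 hG0 g hg (τ y) hroot
  have hy0 : τ y ≠ 0 := by
    intro h
    rw [map_eq_zero] at h
    rw [h, map_zero] at hφ
    exact hx0 hφ.symm
  have hroot' : (σ g⁻¹).HasEigenvalue (τ y)⁻¹ := by
    obtain ⟨v, hv⟩ := hroot.exists_hasEigenvector
    refine Module.End.hasEigenvalue_of_hasEigenvector (x := v) ?_
    rw [Module.End.hasEigenvector_iff, Module.End.mem_eigenspace_iff]
    refine ⟨?_, hv.2⟩
    have h3 : σ g⁻¹ (σ g v) = v := by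
      rw [← Module.End.mul_apply, ← map_mul, inv_mul_cancel, map_one, Module.End.one_apply]
    rw [hv.apply_eq_smul, map_smul] at h3
    rw [eq_inv_smul_iff₀ hy0, h3]
  have h2 := norm_eigenvalue_le_one C N hN hC σ G0 hG0 g⁻¹ (inv_mem hg) (τ y)⁻¹ hroot'
  rw [norm_inv, inv_le_one₀ (norm_pos_iff.2 hy0)] at h2
  exact hτ (le_antisymm h1 h2)

end Specialization

/-! ### Unipotent groups -/

section Kolchin

universe u

/-- If all products of `n` factors `ρ u - 1`, with `u` in a subgroup `D` containing the commutator
subgroup, vanish for an injective `ρ`, then the group is solvable: for `k ≥ 1` the `k`-th derived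
subgroup is congruent to `1` modulo the `k`-th power of the span of the `ρ u - 1`. -/
lemma derivedSeries_eq_bot_of_prod_eq_zero {R G : Type*} [Ring R] [Group G] (ρ : G →* R)
    (hinj : Function.Injective ρ) (D : Subgroup G) (hD : ⁅(⊤ : Subgroup G), ⊤⁆ ≤ D) (n : ℕ)
    (h : ∀ l : List D, l.length = n → (l.map (fun u : D => ρ u - 1)).prod = 0) :
    derivedSeries G (n + 1) = ⊥ := by
  let s : Set R := {x | ∃ u ∈ D, x = ρ u - 1}
  let I : Submodule ℤ R := Submodule.span ℤ s
  have hs : ∀ u ∈ D, ρ u - 1 ∈ I := fun u hu => Submodule.subset_span ⟨u, hu, rfl⟩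
  have hII : I ^ 2 ≤ I := by
    rw [pow_two, Submodule.span_mul_span, Submodule.span_le]
    rintro _ ⟨_, ⟨u, hu, rfl⟩, _, ⟨v, hv, rfl⟩, rfl⟩
    have : (ρ u - 1) * (ρ v - 1) = (ρ (u * v) - 1) - (ρ u - 1) - (ρ v - 1) := by
      rw [map_mul]; noncomm_ring
    change (ρ u - 1) * (ρ v - 1) ∈ I
    rw [this]
    exact sub_mem (sub_mem (hs _ (mul_mem hu hv)) (hs _ hu)) (hs _ hv)
  have hanti : ∀ k, I ^ (k + 2) ≤ I ^ (k + 1) := by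
    intro k
    rw [pow_add, pow_succ]
    exact mul_le_mul' le_rfl hII
  have hl : ∀ k, ∀ u ∈ D, ∀ x ∈ I ^ (k + 1), ρ u * x ∈ I ^ (k + 1) := by
    intro k u hu x hx
    have : ρ u * x = x + (ρ u - 1) * x := by noncomm_ring
    rw [this]
    refine add_mem hx (hanti k ?_)
    rw [pow_succ' I (k + 1)]
    exact Submodule.mul_mem_mul (hs u hu) hx
  have hr : ∀ k, ∀ u ∈ D, ∀ x ∈ I ^ (k + 1), x * ρ u ∈ I ^ (k + 1) := by
    intro k u hu x hx
    have : x * ρ u = x + x * (ρ u - 1) := by noncomm_ring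
    rw [this]
    refine add_mem hx (hanti k ?_)
    rw [pow_succ I (k + 1)]
    exact Submodule.mul_mem_mul hx (hs u hu)
  have hinv : ∀ u, ρ u⁻¹ * ρ u = 1 := fun u => by rw [← map_mul, inv_mul_cancel, map_one]
  have hinv' : ∀ u, ρ u * ρ u⁻¹ = 1 := fun u => by rw [← map_mul, mul_inv_cancel, map_one]
  let H : ℕ → Subgroup G := fun k =>
    { carrier := {u | u ∈ D ∧ ρ u - 1 ∈ I ^ (k + 1)}
      one_mem' := ⟨one_mem _, by rw [map_one, sub_self]; exact zero_mem _⟩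
      mul_mem' := by
        rintro u v ⟨hu, hu'⟩ ⟨hv, hv'⟩
        refine ⟨mul_mem hu hv, ?_⟩
        have : ρ (u * v) - 1 = ρ u * (ρ v - 1) + (ρ u - 1) := by rw [map_mul]; noncomm_ring
        rw [this]
        exact add_mem (hl k u hu _ hv') hu'
      inv_mem' := by
        rintro u ⟨hu, hu'⟩
        refine ⟨inv_mem hu, ?_⟩
        have : ρ u⁻¹ - 1 = -(ρ u⁻¹ * (ρ u - 1)) := by rw [mul_sub, hinv]; noncomm_ring
        rw [this]
        exact neg_mem (hl k _ (inv_mem hu) _ hu') }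
  have hder : ∀ k, derivedSeries G (k + 1) ≤ H k := by
    intro k
    induction k with
    | zero =>
      intro u hu
      have hu' : u ∈ D := hD hu
      exact ⟨hu', by simpa using hs u hu'⟩
    | succ k ih =>
      rw [derivedSeries_succ, Subgroup.commutator_le]
      intro u hu v hv
      obtain ⟨hu1, hu2⟩ := ih hu
      obtain ⟨hv1, hv2⟩ := ih hv
      refine ⟨?_, ?_⟩
      · rw [commutatorElement_def]
        exact mul_mem (mul_mem (mul_mem hu1 hv1) (inv_mem hu1)) (inv_mem hv1)
      have e : ρ (u * v * u⁻¹ * v⁻¹) - 1 =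
          ((ρ u - 1) * (ρ v - 1) - (ρ v - 1) * (ρ u - 1)) * ρ u⁻¹ * ρ v⁻¹ := by
        have e1 : (ρ u - 1) * (ρ v - 1) - (ρ v - 1) * (ρ u - 1) = ρ u * ρ v - ρ v * ρ u := by
          noncomm_ring
        rw [e1, map_mul, map_mul, map_mul, sub_mul, sub_mul, mul_assoc (ρ v) (ρ u), hinv', mul_one,
          hinv']
      rw [commutatorElement_def, e]
      refine hr _ _ (inv_mem hv1) _ (hr _ _ (inv_mem hu1) _ (sub_mem ?_ ?_))
      · rw [pow_succ I (k + 1)]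
        exact Submodule.mul_mem_mul hu2 (hs v hv1)
      · rw [pow_succ I (k + 1)]
        exact Submodule.mul_mem_mul hv2 (hs u hu1)
  have hzero : I ^ n = ⊥ := by
    rw [Submodule.span_pow, Submodule.span_eq_bot]
    intro x hx
    obtain ⟨f, rfl⟩ := Set.mem_pow.1 hx
    choose g hg hg' using fun i => (f i).2
    have := h (List.ofFn (fun i => (⟨g i, hg i⟩ : D))) (by simp)
    rw [List.map_ofFn] at this
    rw [← this]
    congr 2
    funext i
    exact hg' i
  rw [eq_bot_iff]
  intro u hu
  have h1 := (hder n hu).2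
  rw [pow_succ, hzero, Submodule.bot_mul, Submodule.mem_bot, sub_eq_zero] at h1
  exact hinj (h1.trans (map_one ρ).symm)

/-- The action of a `p`-group on a finite vector space in characteristic `p` is unipotent:
it fixes a flag, so products of `dim V` factors `σ u - 1` vanish. -/
lemma prod_sub_one_eq_zero_of_isPGroup {F U : Type*} [Field F] [Group U] {p : ℕ} [Fact p.Prime]
    [CharP F p] (hU : IsPGroup p U) (n : ℕ) :
    ∀ {V : Type u} [AddCommGroup V] [Module F V] [Finite V] (_ : Module.finrank F V ≤ n)
      (σ : U →* Module.End F V) (l : List U), n ≤ l.length →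
      (l.map (fun u => σ u - 1)).prod = 0 := by
  induction n with
  | zero =>
    intro V _ _ _ hn σ l _
    have : Subsingleton V := Module.finrank_zero_iff.1 (Nat.le_zero.1 hn)
    exact Subsingleton.elim _ _
  | succ n ih =>
    intro V _ _ _ hn σ l hl
    rcases subsingleton_or_nontrivial V with hV | hV
    · exact Subsingleton.elim _ _
    let W : Submodule F V := ⨅ u, LinearMap.ker (σ u - 1)
    have hW : ∀ v, v ∈ W ↔ ∀ u, σ u v = v := by
      intro v
      simp [W, Submodule.mem_iInf, sub_eq_zero]
    -- the number of fixed vectors is divisible by `p`, hence there is a nonzero one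
    have hWne : W ≠ ⊥ := by
      let _ : MulAction U V := MulAction.compHom V σ
      have hact : ∀ (u : U) (v : V), u • v = σ u v := fun _ _ => rfl
      have hdvd : p ∣ Nat.card V := by
        obtain ⟨v, hv⟩ := exists_ne (0 : V)
        have h1 : addOrderOf v = p := by
          apply addOrderOf_eq_prime _ hv
          rw [← Nat.cast_smul_eq_nsmul F, CharP.cast_eq_zero, zero_smul]
        rw [← h1]
        exact addOrderOf_dvd_natCard v
      obtain ⟨b, hb, hb0⟩ := hU.exists_fixed_point_of_prime_dvd_card_of_fixed_point V hdvd
        (a := 0) (fun u => by rw [hact, map_zero])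
      intro hbot
      have : b ∈ W := (hW b).2 (fun u => hb u)
      rw [hbot, Submodule.mem_bot] at this
      exact hb0 this.symm
    have hinv : ∀ u, W ≤ W.comap (σ u) := by
      intro u v hv
      rw [Submodule.mem_comap, (hW v).1 hv u]
      exact hv
    let σ' : U →* Module.End F (V ⧸ W) :=
      { toFun := fun u => W.mapQ W (σ u) (hinv u)
        map_one' := by ext v; simp
        map_mul' := by intro a b; ext v; simp }
    have hrank : Module.finrank F (V ⧸ W) ≤ n := by
      have h1 := W.finrank_quotient_add_finrank
      have h2 : 0 < Module.finrank F W := Module.finrank_pos_iff.2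
        ((Submodule.nontrivial_iff_ne_bot).2 hWne)
      omega
    have hfin : Finite (V ⧸ W) := Finite.of_surjective _ W.mkQ_surjective
    have hcomm : ∀ (l : List U) (v : V), W.mkQ ((l.map (fun u => σ u - 1)).prod v) =
        (l.map (fun u => σ' u - 1)).prod (W.mkQ v) := by
      intro l
      induction l with
      | nil => intro v; rfl
      | cons u l ihl =>
        intro v
        rw [List.map_cons, List.prod_cons, List.map_cons, List.prod_cons, Module.End.mul_apply,
          Module.End.mul_apply, ← ihl v]
        simp [σ']
    match l, hl with
    | u :: l, hl =>
      rw [List.map_cons, List.prod_cons]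
      ext v
      have h0 := hcomm l v
      rw [ih hrank σ' l (by simpa using hl), LinearMap.zero_apply, Submodule.mkQ_apply,
        Submodule.Quotient.mk_eq_zero] at h0
      rw [Module.End.mul_apply, LinearMap.sub_apply, (hW _).1 h0 u]
      simp

end Kolchin

/-! ### Commutators are virtually unipotent -/

section Unipotent

open Matrix

/-- Kolchin's theorem over a finite field: the image of a unipotent group is a `p`-group. -/
lemma prod_sub_one_eq_zero_of_finite_field {F U : Type*} [Field F] [Finite F] [Group U] {d : ℕ}
    (ρ : U →* Matrix (Fin d) (Fin d) F) (hρ : ∀ u, (ρ u - 1) ^ d = 0) (l : List U)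
    (hl : l.length = d) : (l.map (fun u => ρ u - 1)).prod = 0 := by
  classical
  obtain ⟨p, hp⟩ := CharP.exists F
  have hprime : Fact p.Prime := ⟨(CharP.char_is_prime_or_zero F p).resolve_right
    (CharP.char_ne_zero_of_finite F p)⟩
  let P : Subgroup (Matrix (Fin d) (Fin d) F)ˣ := ρ.toHomUnits.range
  have hP : IsPGroup p P := by
    rintro ⟨_, u, rfl⟩
    rcases Nat.eq_zero_or_pos d with rfl | hd
    · exact ⟨0, Subsingleton.elim _ _⟩
    have : Nonempty (Fin d) := ⟨⟨0, hd⟩⟩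
    refine ⟨d, Subtype.ext (Units.ext ?_)⟩
    have h1 : (ρ u - 1) ^ p ^ d = 0 :=
      pow_eq_zero_of_le (Nat.lt_pow_self hprime.out.one_lt).le (hρ u)
    rw [sub_pow_char_pow_of_commute p d (Commute.one_right _), one_pow, sub_eq_zero] at h1
    exact h1
  let e := (Matrix.toLinAlgEquiv' (R := F) (n := Fin d))
  let σ : P →* Module.End F (Fin d → F) :=
    (e.toAlgHom.toRingHom.toMonoidHom).comp ((Units.coeHom _).comp P.subtype)
  have h := prod_sub_one_eq_zero_of_isPGroup (F := F) hP d (V := Fin d → F) (by simp) σ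
    (l.map ρ.toHomUnits.rangeRestrict) (by simp [hl])
  apply e.injective
  rw [map_zero, ← h, map_list_prod, List.map_map, List.map_map]
  congr 2
  funext u
  simp only [Function.comp_apply, map_sub, map_one]
  rfl

/-- Kolchin's theorem over a finitely generated domain, by reduction modulo all maximal ideals. -/
lemma prod_sub_one_eq_zero_of_finiteType {A U : Type*} [CommRing A] [IsDomain A]
    [Algebra.FiniteType ℤ A] [Group U] {d : ℕ}
    (ρ : U →* Matrix (Fin d) (Fin d) A) (hρ : ∀ u, (ρ u - 1) ^ d = 0) (l : List U)
    (hl : l.length = d) : (l.map (fun u => ρ u - 1)).prod = 0 := by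
  ext i j
  by_contra hne
  obtain ⟨m, hm, -, hmem⟩ := exists_isMaximal_notMem (⊥ : Ideal A)
    (a := (l.map (fun u => ρ u - 1)).prod i j) (by simpa using hne)
  have : Finite (A ⧸ m) := finite_quotient_of_isMaximal m
  let _ : Field (A ⧸ m) := Ideal.Quotient.field m
  let f := RingHom.mapMatrix (m := Fin d) (Ideal.Quotient.mk m)
  have h := prod_sub_one_eq_zero_of_finite_field (f.toMonoidHom.comp ρ)
    (fun u => by
      change (f (ρ u) - 1) ^ d = 0
      rw [← map_one f, ← map_sub, ← map_pow, hρ, map_zero]) l hl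
  have h2 : f (l.map (fun u => ρ u - 1)).prod = 0 := by
    rw [← h, map_list_prod, List.map_map]
    congr 2
    funext u
    simp
  have h3 := congrFun (congrFun h2 i) j
  exact hmem (Ideal.Quotient.eq_zero_iff_mem.1 h3)

/-- There is a common exponent for the eigenvalues of the elements of `⁅G0, G0⁆`: up to conjugacy
and `N`-th powers only the eigenvalues of finitely many elements are involved. -/
lemma exists_eigenvalue_exponent {G : Type*} [Group G] (hfg : Group.FG G) (C : Finset G) (N : ℕ)
    (hN : 0 < N) (hC : ∀ g : G, ∃ c ∈ C, ∃ k : ℕ, ∃ y : G, g ^ N = y * c ^ k * y⁻¹)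
    {K : Type*} [Field K] [IsAlgClosed K] {d : ℕ} (ρ : G →* GL (Fin d) K) (G0 : Subgroup G)
    (hG0 : ∀ M : Subgroup G, M.index ≠ 0 → M.index ≤ d ^ d → G0 ≤ M) :
    ∃ E : ℕ, 0 < E ∧ ∀ g ∈ ⁅G0, G0⁆, ∀ x : K,
      (ρ g : Matrix (Fin d) (Fin d) K).charpoly.IsRoot x → x ^ E = 1 := by
  classical
  have key : ∀ c : G, ∃ e : ℕ, 0 < e ∧
      ((∀ z ∈ spectrum K (ρ c : Matrix (Fin d) (Fin d) K), ∃ n : ℕ, 0 < n ∧ z ^ n = 1) →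
        ∀ z ∈ spectrum K (ρ c : Matrix (Fin d) (Fin d) K), z ^ e = 1) := by
    intro c
    by_cases hc : ∀ z ∈ spectrum K (ρ c : Matrix (Fin d) (Fin d) K), ∃ n : ℕ, 0 < n ∧ z ^ n = 1
    · choose! n hn hn' using hc
      have hfin := Matrix.finite_spectrum (ρ c : Matrix (Fin d) (Fin d) K)
      refine ⟨∏ z ∈ hfin.toFinset, n z,
        Finset.prod_pos (fun z hz => hn z (hfin.mem_toFinset.1 hz)), fun _ z hz => ?_⟩
      obtain ⟨q, hq⟩ := Finset.dvd_prod_of_mem n (hfin.mem_toFinset.2 hz)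
      rw [hq, pow_mul, hn' z hz, one_pow]
    · exact ⟨1, one_pos, fun h => absurd h hc⟩
  choose e he he' using key
  refine ⟨N * ∏ c ∈ C, e c, Nat.mul_pos hN (Finset.prod_pos (fun c _ => he c)), ?_⟩
  intro g hg x hx
  obtain ⟨c, hcC, k, y, hgk⟩ := hC g
  have hspec : spectrum K ((ρ g : Matrix (Fin d) (Fin d) K) ^ N) =
      spectrum K ((ρ c : Matrix (Fin d) (Fin d) K) ^ k) := by
    have h1 : ((ρ g : Matrix (Fin d) (Fin d) K) ^ N) =
        (ρ y : Matrix (Fin d) (Fin d) K) * (ρ c : Matrix (Fin d) (Fin d) K) ^ k *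
          ((ρ y)⁻¹ : GL (Fin d) K) := by
      rw [← Units.val_pow_eq_pow_val, ← map_pow, hgk, map_mul, map_mul, map_pow, map_inv]
      rfl
    rw [h1, spectrum.units_conjugate]
  have hxN : x ^ N ∈ spectrum K ((ρ c : Matrix (Fin d) (Fin d) K) ^ k) := by
    rw [← hspec]
    exact spectrum.pow_mem_pow _ N (Matrix.mem_spectrum_iff_isRoot_charpoly.2 hx)
  rw [pow_mul]
  rcases Nat.eq_zero_or_pos k with rfl | hk
  · rw [pow_zero, Matrix.mem_spectrum_iff_isRoot_charpoly, Matrix.charpoly_one, Polynomial.IsRoot,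
      Polynomial.eval_pow, Polynomial.eval_sub, Polynomial.eval_X, Polynomial.eval_one] at hxN
    rw [sub_eq_zero.1 (eq_zero_of_pow_eq_zero hxN), one_pow]
  have hgood : ∀ z ∈ spectrum K (ρ c : Matrix (Fin d) (Fin d) K), ∃ n : ℕ, 0 < n ∧ z ^ n = 1 := by
    intro z hz
    have h1 : z ^ k ∈ spectrum K ((ρ (g ^ N) : GL (Fin d) K) : Matrix (Fin d) (Fin d) K) := by
      rw [map_pow, Units.val_pow_eq_pow_val, hspec]
      exact spectrum.pow_mem_pow _ k hz
    obtain ⟨n, hn, hzn⟩ := eigenvalue_root_of_unity hfg C N hN hC ρ G0 hG0 (g ^ N) (pow_mem hg N)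
      (z ^ k) (Matrix.mem_spectrum_iff_isRoot_charpoly.1 h1)
    exact ⟨k * n, Nat.mul_pos hk hn, by rw [pow_mul, hzn]⟩
  rw [spectrum.map_pow_of_pos _ hk] at hxN
  obtain ⟨z, hz, hzx⟩ := hxN
  obtain ⟨q, hq⟩ := Finset.dvd_prod_of_mem e hcC
  have hz1 := he' c hgood z hz
  rw [← hzx]
  change (z ^ k) ^ _ = 1
  rw [← pow_mul, hq, mul_left_comm, pow_mul, hz1, one_pow]

lemma sub_one_pow_eq_zero_of_roots {K : Type*} [Field K] [IsAlgClosed K] {d : ℕ}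
    (M : Matrix (Fin d) (Fin d) K) (h : ∀ x, M.charpoly.IsRoot x → x = 1) : (M - 1) ^ d = 0 := by
  have hmonic := M.charpoly_monic
  have hsplit := IsAlgClosed.splits M.charpoly
  have hrep : M.charpoly.roots = Multiset.replicate d 1 := by
    rw [Multiset.eq_replicate]
    refine ⟨?_, fun x hx => h x (Polynomial.isRoot_of_mem_roots hx)⟩
    rw [IsAlgClosed.card_roots_eq_natDegree, Matrix.charpoly_natDegree_eq_dim, Fintype.card_fin]
  have h1 := hsplit.eq_prod_roots_of_monic hmonic
  rw [hrep, Multiset.map_replicate, Multiset.prod_replicate] at h1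
  have h2 := M.aeval_self_charpoly
  rw [h1] at h2
  simpa using h2

/-- The theorem over an algebraically closed field. For a maximal ideal modulo which no other root of
unity of the relevant order becomes `1`, the intersection `G1` of `G0` with the kernel of reduction
has a unipotent commutator subgroup, hence is solvable. -/
lemma vc_of_bVCyc_algClosed {G : Type*} [Group G] (hfg : Group.FG G) (hb : bVCyc G)
    {K : Type*} [Field K] [IsAlgClosed K] {d : ℕ} (ρ : G →* GL (Fin d) K)
    (hinj : Function.Injective ρ) : VirtuallyCyclic G := by
  classical
  obtain ⟨C, N, hN, hC⟩ : ∃ (C : Finset G) (N : ℕ), 0 < N ∧ ∀ g : G, ∃ c ∈ C, ∃ k : ℕ, ∃ y : G,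
      g ^ N = y * c ^ k * y⁻¹ := by
    obtain ⟨C, N, hN, hC⟩ := hb.exists_pow
    refine ⟨C ∪ C.image (·⁻¹), N, hN, fun g => ?_⟩
    obtain ⟨c, hc, k, y, h⟩ := hC g
    obtain ⟨n, rfl | rfl⟩ := k.eq_nat_or_neg
    · exact ⟨c, Finset.mem_union_left _ hc, n, y, by rw [h, zpow_natCast]⟩
    · refine ⟨c⁻¹, Finset.mem_union_right _ (Finset.mem_image_of_mem _ hc), n, y, ?_⟩
      rw [h, _root_.zpow_neg, zpow_natCast, inv_pow]
  obtain ⟨G0, hG0fin, hG0⟩ := exists_le_of_index_le hfg (d ^ d)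
  obtain ⟨E, hE, hroots⟩ := exists_eigenvalue_exponent hfg C N hN hC ρ G0 hG0
  let μ : Finset K := Polynomial.nthRootsFinset E (1 : K)
  have hμ : ∀ x : K, x ^ E = 1 → x ∈ μ := fun x hx => (Polynomial.mem_nthRootsFinset hE _).2 hx
  -- a finitely generated ring over which `ρ` and the relevant roots of unity are defined
  let B : Subalgebra ℤ K := Algebra.adjoin ℤ (μ : Set K)
  have hB : Algebra.FiniteType ℤ B := (Subalgebra.fg_iff_finiteType B).1 ⟨μ, rfl⟩
  obtain ⟨A, hA, ρ', hρ'⟩ := exists_fg_subalgebra B hfg ρ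
  have hA' : Algebra.FiniteType B A := (Subalgebra.fg_iff_finiteType A).1 hA
  have hAZ : Algebra.FiniteType ℤ A := Algebra.FiniteType.trans hB hA'
  have hμA : ∀ x ∈ μ, x ∈ A := fun x hx =>
    A.algebraMap_mem (⟨x, Algebra.subset_adjoin hx⟩ : B)
  let ν : Finset A := (Finset.univ : Finset μ).image (fun x => ⟨x.1, hμA x.1 x.2⟩)
  have hne : ∏ x ∈ ν.erase 1, (x - 1) ≠ 0 :=
    Finset.prod_ne_zero_iff.2 (fun x hx => sub_ne_zero.2 (Finset.mem_erase.1 hx).1)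
  obtain ⟨m, hm, -, hmem⟩ := exists_isMaximal_notMem (⊥ : Ideal A) (by simpa using hne)
  have hmfin : Finite (A ⧸ m) := finite_quotient_of_isMaximal m
  let f : G →* (Matrix (Fin d) (Fin d) (A ⧸ m))ˣ :=
    ((RingHom.mapMatrix (m := Fin d) (Ideal.Quotient.mk m)).toMonoidHom.comp ρ').toHomUnits
  have hf : ∀ g, ((f g : (Matrix (Fin d) (Fin d) (A ⧸ m))ˣ) : Matrix (Fin d) (Fin d) (A ⧸ m)) =
    (ρ' g).map (Ideal.Quotient.mk m) := fun g => rfl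
  have hmapinj : Function.Injective (fun M : Matrix (Fin d) (Fin d) A => M.map (algebraMap A K)) :=
    Matrix.map_injective (FaithfulSMul.algebraMap_injective A K)
  let G1 : Subgroup G := G0 ⊓ f.ker
  have hG1fin : G1.FiniteIndex := inferInstance
  have hunip : ∀ g ∈ ⁅G1, G1⁆, (ρ' g - 1) ^ d = 0 := by
    intro g hg
    have hg0 : g ∈ ⁅G0, G0⁆ := Subgroup.commutator_mono inf_le_left inf_le_left hg
    have hgk : g ∈ f.ker := Subgroup.commutator_le_left f.ker f.ker
      (Subgroup.commutator_mono inf_le_right inf_le_right hg)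
    have h1 : ((ρ g : Matrix (Fin d) (Fin d) K) - 1) ^ d = 0 := by
      apply sub_one_pow_eq_zero_of_roots
      intro x hx
      have hxμ : x ∈ μ := hμ x (hroots g hg0 x hx)
      let x' : A := ⟨x, hμA x hxμ⟩
      have hx' : (ρ' g).charpoly.eval x' = 0 := by
        apply FaithfulSMul.algebraMap_injective A K
        rw [map_zero, ← Polynomial.eval_map_apply, ← Matrix.charpoly_map, hρ']
        exact hx
      have h2 : (Ideal.Quotient.mk m x' - 1) ^ d = 0 := by
        have h3 := congrArg (Ideal.Quotient.mk m) hx'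
        rw [map_zero, ← Polynomial.eval_map_apply, ← Matrix.charpoly_map, ← hf g,
          MonoidHom.mem_ker.1 hgk, Units.val_one, Matrix.charpoly_one, Fintype.card_fin] at h3
        simpa using h3
      have h4 : x' - 1 ∈ m := by
        rw [← Ideal.Quotient.eq_zero_iff_mem, map_sub, map_one]
        exact eq_zero_of_pow_eq_zero h2
      by_contra hx1
      refine hmem (Ideal.mem_of_dvd m (Finset.dvd_prod_of_mem (fun x : A => x - 1) (a := x') ?_) h4)
      refine Finset.mem_erase.2 ⟨fun h => hx1 (congrArg Subtype.val h), ?_⟩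
      exact Finset.mem_image.2 ⟨⟨x, hxμ⟩, Finset.mem_univ _, rfl⟩
    apply hmapinj
    change (RingHom.mapMatrix (m := Fin d) (algebraMap A K)) _ =
      (RingHom.mapMatrix (m := Fin d) (algebraMap A K)) 0
    rw [map_pow, map_sub, map_one, map_zero, ← h1, ← hρ']
    rfl
  have hρ'inj : Function.Injective ρ' := by
    intro a b hab
    apply hinj
    apply Units.ext
    rw [← hρ', ← hρ', hab]
  have hsolv : derivedSeries G1 (d + 1) = ⊥ := by
    apply derivedSeries_eq_bot_of_prod_eq_zero (ρ'.comp G1.subtype)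
      (hρ'inj.comp G1.subtype_injective) ⁅(⊤ : Subgroup G1), ⊤⁆ le_rfl d
    intro l hl
    refine prod_sub_one_eq_zero_of_finiteType
      ((ρ'.comp G1.subtype).comp (Subgroup.subtype ⁅(⊤ : Subgroup G1), ⊤⁆)) (fun u => ?_) l hl
    apply hunip
    have := Subgroup.mem_map_of_mem G1.subtype u.2
    rw [Subgroup.map_commutator, ← MonoidHom.range_eq_map, Subgroup.range_subtype] at this
    exact this
  have hfg1 : Group.FG G1 := Subgroup.fg_of_index_ne_zero G1
  exact vc_of_finiteIndex G1 (vc_of_derivedSeries (d + 1) hfg1 (bVCyc_of_finiteIndex G1 hb) hsolv)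

end Unipotent

/-- A finitely generated linear group has bVCyc if and only if it is virtually cyclic. -/
theorem stmt_0 {K : Type*} [Field K] (d : ℕ) (G : Subgroup (GL (Fin d) K))
    (hfg : Group.FG G) : bVCyc G ↔ VirtuallyCyclic G := by
  constructor
  · intro hb
    let ι := algebraMap K (AlgebraicClosure K)
    refine vc_of_bVCyc_algClosed hfg hb ((Matrix.GeneralLinearGroup.map ι).comp G.subtype) ?_
    intro a b hab
    apply Subtype.ext
    apply Units.ext
    apply Matrix.map_injective ι.injective
    exact congrArg Units.val hab
  · intro hv
    exact ⟨{⊤}, by simpa using vc_of_injective _ (Subgroup.subtype_injective ⊤) hv,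
      fun g => ⟨⊤, by simp, 1, trivial⟩⟩
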